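/- arXiv:1801.10493 — 2 statements merged into one kernel-verified Lean document; each statement's English description precedes it below -/
import Mathlib

section
/- Let N ≥ 3 and 1 ≤ k ≤ N−2, and write points of ℝ^N as x = (t,z) ∈ ℝ^k × ℝ^{N−k}. The function w(t,z) = [(N−2)(N−k−1)]^{(N−2)/2} ((1+|z|)² + |t|²)^{(2−N)/2} satisfies −Δw = |z|^{−1} w^{N/(N−2)} pointwise on {(t,z) ∈ ℝ^k × ℝ^{N−k} : z ≠ 0}. (Note that N/(N−2) = 2*_1 − 1 with 2*_1 = 2(N−1)/(N−2), so w solves the Euler–Lagrange equation of the Hardy–Sobolev inequality with σ = 1.) -/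
open MeasureTheory Filter Metric Set Bornology

noncomputable section

abbrev Euc (N : ℕ) := EuclideanSpace ℝ (Fin N)

/-- Euclidean norm of the `z`-component (the last `N - k` coordinates) of `x ∈ ℝ^N`. -/
def zNorm (N k : ℕ) (x : Euc N) : ℝ :=
  Real.sqrt (∑ i : Fin N, if k ≤ (i : ℕ) then (x i) ^ 2 else 0)

/-- Euclidean norm of the `t`-component (the first `k` coordinates) of `x ∈ ℝ^N`. -/
def tNorm (N k : ℕ) (x : Euc N) : ℝ :=
  Real.sqrt (∑ i : Fin N, if (i : ℕ) < k then (x i) ^ 2 else 0)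

/-- The critical Hardy–Sobolev exponent `2*_σ = 2(N-σ)/(N-2)`. -/
def twoStar (N : ℕ) (σ : ℝ) : ℝ := 2 * ((N : ℝ) - σ) / ((N : ℝ) - 2)

/-- Dirichlet energy `∫ |∇v|²`. -/
def gradL2 (N : ℕ) (v : Euc N → ℝ) : ℝ := ∫ x, ‖fderiv ℝ v x‖ ^ 2

/-- Hardy–Sobolev integral `∫ |z|^{-σ} |v|^{2*_σ}`. -/
def hsInt (N k : ℕ) (σ : ℝ) (v : Euc N → ℝ) : ℝ :=
  ∫ x, zNorm N k x ^ (-σ) * |v x| ^ twoStar N σ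

/-- Membership in `D^{1,2}(ℝ^N)`, the completion of `C_c^∞(ℝ^N)` for the norm
`v ↦ (∫ |∇v|²)^{1/2}`: `v` is a limit of smooth compactly supported functions, with
gradients converging in `L²` (and, via the Sobolev embedding of the completion,
the functions converging in `L^{2N/(N-2)}`). -/
def MemD12 (N : ℕ) (v : Euc N → ℝ) : Prop :=
  ∃ φ : ℕ → Euc N → ℝ,
    (∀ n, ContDiff ℝ (⊤ : ℕ∞) (φ n) ∧ HasCompactSupport (φ n)) ∧
    Tendsto (fun n => eLpNorm (fun x => v x - φ n x)
      (ENNReal.ofReal (2 * (N : ℝ) / ((N : ℝ) - 2))) volume) atTop (nhds 0) ∧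
    Tendsto (fun n => eLpNorm (fun x => fderiv ℝ v x - fderiv ℝ (φ n) x) 2 volume)
      atTop (nhds 0)

/-- The best constant `S_{N,σ}` in the cylindrical Hardy–Sobolev inequality. -/
def Sconst (N k : ℕ) (σ : ℝ) : ℝ :=
  sInf {s : ℝ | ∃ v, MemD12 N v ∧ hsInt N k σ v = 1 ∧ s = gradL2 N v}

/-- A (positive) ground state for `S_{N,σ}`. -/
def GroundState (N k : ℕ) (σ : ℝ) (w : Euc N → ℝ) : Prop :=
  MemD12 N w ∧ (∀ x, 0 < w x) ∧ hsInt N k σ w = 1 ∧ gradL2 N w = Sconst N k σ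

/-- Membership in `H¹₀(Ω)`: limit of smooth functions compactly supported in `Ω`,
in the `H¹` norm. -/
def MemH10 (N : ℕ) (Ω : Set (Euc N)) (u : Euc N → ℝ) : Prop :=
  ∃ φ : ℕ → Euc N → ℝ,
    (∀ n, ContDiff ℝ (⊤ : ℕ∞) (φ n) ∧ HasCompactSupport (φ n) ∧ tsupport (φ n) ⊆ Ω) ∧
    Tendsto (fun n => eLpNorm (fun x => u x - φ n x) 2 volume) atTop (nhds 0) ∧
    Tendsto (fun n => eLpNorm (fun x => fderiv ℝ u x - fderiv ℝ (φ n) x) 2 volume)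
      atTop (nhds 0)

/-- Coercivity of the operator `-Δ + h` on `H¹₀(Ω)`. -/
def CoerciveOp (N : ℕ) (Ω : Set (Euc N)) (h : Euc N → ℝ) : Prop :=
  ∃ c > 0, ∀ u, MemH10 N Ω u →
    c * ∫ x in Ω, (‖fderiv ℝ u x‖ ^ 2 + u x ^ 2) ≤
      ∫ x in Ω, (‖fderiv ℝ u x‖ ^ 2 + h x * u x ^ 2)

/-- The Hardy–Sobolev quotient of `u` on `Ω` with singularity `Γ` and potential `h`. -/
def hsQuot (N : ℕ) (σ : ℝ) (Ω Γ : Set (Euc N)) (h : Euc N → ℝ) (u : Euc N → ℝ) : ℝ :=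
  ((∫ x in Ω, ‖fderiv ℝ u x‖ ^ 2) + ∫ x in Ω, h x * u x ^ 2) /
    (∫ x in Ω, infDist x Γ ^ (-σ) * |u x| ^ twoStar N σ) ^ (2 / twoStar N σ)

/-- The best constant `μ_{h,σ}(Ω,Γ)`. -/
def muHS (N : ℕ) (σ : ℝ) (Ω Γ : Set (Euc N)) (h : Euc N → ℝ) : ℝ :=
  sInf {m : ℝ | ∃ u, MemH10 N Ω u ∧ ¬ (u =ᵐ[volume.restrict Ω] (0 : Euc N → ℝ)) ∧
    m = hsQuot N σ Ω Γ h u}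

/-- The pointwise Laplacian of `f : ℝ^N → ℝ`. -/
def lapl (N : ℕ) (f : Euc N → ℝ) (x : Euc N) : ℝ :=
  ∑ i : Fin N, fderiv ℝ (fun y => fderiv ℝ f y (EuclideanSpace.single i 1)) x
    (EuclideanSpace.single i 1)

/-- The explicit extremal for the cylindrical Hardy–Sobolev inequality with `σ = 1`:
`w(t,z) = [(N-2)(N-k-1)]^{(N-2)/2} ((1+|z|)² + |t|²)^{(2-N)/2}`. -/
def wCyl (N k : ℕ) (x : Euc N) : ℝ :=
  (((N : ℝ) - 2) * ((N : ℝ) - k - 1)) ^ (((N : ℝ) - 2) / 2) *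
    ((1 + zNorm N k x) ^ 2 + tNorm N k x ^ 2) ^ ((2 - (N : ℝ)) / 2)

/-!
Write `n = dim E`, `d = dim K`, let `z` be the orthogonal projection of `x` onto `K` and put
`u = (1 + |z|)² + |t|² = 1 + 2|z| + |x|²`. Since `|∇|z|| = 1` and `Δ|z| = (d - 1) / |z|`, one gets
`|∇u|² = 4u` and `Δu = 2n + 2(d - 1) / |z|`, hence
`Δ(u ^ p) = p u ^ (p - 1) (4(p - 1) + 2n + 2(d - 1) / |z|)`. The exponent `p = (2 - n) / 2` is the
one for which the bulk terms `4(p - 1) + 2n` cancel, leaving only the singular term in `1 / |z|`.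
-/

section ChainRule

variable {E F : Type*} [NormedAddCommGroup E] [NormedSpace ℝ E]
  [NormedAddCommGroup F] [NormedSpace ℝ F] {x : E}

lemma differentiableAt_fderiv {f : E → F} (hf : ContDiffAt ℝ 2 f x) :
    DifferentiableAt ℝ (fderiv ℝ f) x :=
  (hf.fderiv_right (m := 1) (by norm_num)).differentiableAt one_ne_zero

lemma fderiv_fderiv_apply {f : E → F} (hf : ContDiffAt ℝ 2 f x) (v w : E) :
    fderiv ℝ (fun y => fderiv ℝ f y v) x w = fderiv ℝ (fderiv ℝ f) x w v := by
  simp [fderiv_clm_apply (differentiableAt_fderiv hf) (differentiableAt_const v)]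

lemma fderiv_comp_apply_eq_smul_deriv {g : ℝ → F} {f : E → ℝ} (hg : DifferentiableAt ℝ g (f x))
    (hf : DifferentiableAt ℝ f x) (v : E) :
    fderiv ℝ (fun y => g (f y)) x v = fderiv ℝ f x v • deriv g (f x) := by
  rw [fderiv_fun_comp x hg hf, ContinuousLinearMap.comp_apply, fderiv_eq_smul_deriv]

lemma fderiv_fderiv_comp_apply {g : ℝ → F} {f : E → ℝ} (hg : ContDiffAt ℝ 2 g (f x))
    (hf : ContDiffAt ℝ 2 f x) (v : E) :
    fderiv ℝ (fderiv ℝ fun y => g (f y)) x v v = fderiv ℝ f x v ^ 2 • deriv (deriv g) (f x)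
      + fderiv ℝ (fderiv ℝ f) x v v • deriv g (f x) := by
  have hfirst : (fun y => fderiv ℝ (fun y => g (f y)) y v) =ᶠ[nhds x]
      fun y => fderiv ℝ f y v • deriv g (f y) := by
    filter_upwards [hf.eventually (by simp),
      hf.continuousAt.eventually (hg.eventually (by simp))] with y hfy hgy
    exact fderiv_comp_apply_eq_smul_deriv (hgy.differentiableAt two_ne_zero)
      (hfy.differentiableAt two_ne_zero) v
  have hfx : DifferentiableAt ℝ f x := hf.differentiableAt two_ne_zero
  have hf' : DifferentiableAt ℝ (fun y => fderiv ℝ f y v) x :=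
    (differentiableAt_fderiv hf).clm_apply (differentiableAt_const v)
  have hg' : DifferentiableAt ℝ (deriv g) (f x) :=
    (hg.derivWithin (m := 1) (by norm_num)).differentiableAt one_ne_zero
  have hg'f : DifferentiableAt ℝ (fun y => deriv g (f y)) x := hg'.comp x hfx
  calc fderiv ℝ (fderiv ℝ fun y => g (f y)) x v v
      = fderiv ℝ (fun y => fderiv ℝ f y v • deriv g (f y)) x v := by
        rw [← fderiv_fderiv_apply (hg.fun_comp x hf), hfirst.fderiv_eq]
    _ = fderiv ℝ f x v • (fderiv ℝ f x v • deriv (deriv g) (f x))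
          + fderiv ℝ (fderiv ℝ f) x v v • deriv g (f x) := by
        rw [fderiv_fun_smul hf' hg'f]
        simp [fderiv_comp_apply_eq_smul_deriv hg' hfx, fderiv_fderiv_apply hf]
    _ = _ := by rw [smul_smul, ← pow_two]

end ChainRule

section Laplacian

open InnerProductSpace Laplacian

variable {E F : Type*} [NormedAddCommGroup E] [InnerProductSpace ℝ E] [FiniteDimensional ℝ E]
  [NormedAddCommGroup F] [NormedSpace ℝ F] {x : E}

lemma laplacian_eq_sum_fderiv_fderiv {ι : Type*} [Fintype ι] (b : OrthonormalBasis ι ℝ E)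
    (f : E → F) (x : E) : Δ f x = ∑ i, fderiv ℝ (fderiv ℝ f) x (b i) (b i) := by
  simp [laplacian_eq_iteratedFDeriv_orthonormalBasis f b, iteratedFDeriv_two_apply]

theorem laplacian_comp {g : ℝ → F} {f : E → ℝ} (hg : ContDiffAt ℝ 2 g (f x))
    (hf : ContDiffAt ℝ 2 f x) :
    Δ (fun y => g (f y)) x =
      ‖fderiv ℝ f x‖ ^ 2 • deriv (deriv g) (f x) + Δ f x • deriv g (f x) := by
  let b := stdOrthonormalBasis ℝ E
  simp only [laplacian_eq_sum_fderiv_fderiv b, fderiv_fderiv_comp_apply hg hf,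
    Finset.sum_add_distrib, ← Finset.sum_smul, b.norm_dual]

theorem laplacian_rpow_const {f : E → ℝ} (hf : ContDiffAt ℝ 2 f x) (hx : f x ≠ 0) (p : ℝ) :
    Δ (fun y => f y ^ p) x =
      p * ((p - 1) * f x ^ (p - 2) * ‖fderiv ℝ f x‖ ^ 2 + f x ^ (p - 1) * Δ f x) := by
  have hp : ContDiffAt ℝ 2 (fun s : ℝ => s ^ p) (f x) := Real.contDiffAt_rpow_const_of_ne hx
  rw [laplacian_comp hp hf]
  simp only [Real.deriv_rpow_const', deriv_const_mul_field, smul_eq_mul, sub_sub,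
    one_add_one_eq_two]
  ring

end Laplacian

section Projection

open scoped RealInnerProductSpace

variable {E : Type*} [NormedAddCommGroup E] [InnerProductSpace ℝ E]
  (K : Submodule ℝ E) [K.HasOrthogonalProjection] {x : E}

lemma inner_starProjection_starProjection (x y : E) :
    ⟪K.starProjection x, K.starProjection y⟫ = ⟪K.starProjection x, y⟫ := by
  rw [← K.inner_starProjection_left_eq_right,
    K.starProjection_eq_self_iff.mpr (K.starProjection_apply_mem x)]

lemma inner_starProjection_self (x : E) :
    ⟪K.starProjection x, x⟫ = ‖K.starProjection x‖ ^ 2 := by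
  rw [← real_inner_self_eq_norm_sq, inner_starProjection_starProjection]

lemma fderiv_norm_sq_starProjection :
    fderiv ℝ (fun y => ‖K.starProjection y‖ ^ 2) =
      fun x => innerSL ℝ ((2 : ℝ) • K.starProjection x) := by
  ext x v
  rw [K.starProjection.hasFDerivAt.norm_sq.fderiv]
  simp [inner_starProjection_starProjection]

lemma fderiv_fderiv_norm_sq_starProjection (x v : E) :
    fderiv ℝ (fderiv ℝ fun y => ‖K.starProjection y‖ ^ 2) x v v =
      2 * ‖K.starProjection v‖ ^ 2 := by
  have hgrad : fderiv ℝ (fun y => ‖K.starProjection y‖ ^ 2) =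
      (innerSL ℝ).comp ((2 : ℝ) • K.starProjection) := fderiv_norm_sq_starProjection K
  rw [hgrad, ContinuousLinearMap.fderiv]
  simp [inner_starProjection_self]

variable {K}

lemma contDiffAt_norm_starProjection {n : WithTop ℕ∞} (hx : K.starProjection x ≠ 0) :
    ContDiffAt ℝ n (fun y => ‖K.starProjection y‖) x :=
  K.starProjection.contDiff.contDiffAt.norm ℝ hx

lemma hasFDerivAt_norm_starProjection (hx : K.starProjection x ≠ 0) :
    HasFDerivAt (fun y => ‖K.starProjection y‖)
      (innerSL ℝ (‖K.starProjection x‖⁻¹ • K.starProjection x)) x := by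
  have hsq : HasFDerivAt (fun y => ‖K.starProjection y‖ ^ 2) _ x :=
    K.starProjection.hasFDerivAt.norm_sq
  have hsqrt := hsq.sqrt (by simpa using hx)
  simp only [Real.sqrt_sq (norm_nonneg _)] at hsqrt
  refine hsqrt.congr_fderiv ?_
  ext v
  simp only [one_div, mul_inv_rev, smul_apply, ContinuousLinearMap.comp_apply, coe_innerSL_apply,
    inner_starProjection_starProjection, nsmul_eq_mul, Nat.cast_ofNat, smul_eq_mul, map_smul]
  ring

lemma norm_fderiv_norm_starProjection (hx : K.starProjection x ≠ 0) :
    ‖fderiv ℝ (fun y => ‖K.starProjection y‖) x‖ = 1 := by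
  rw [(hasFDerivAt_norm_starProjection hx).fderiv, innerSL_apply_norm]
  exact norm_smul_inv_norm hx

end Projection

section LaplacianProjection

open Module InnerProductSpace Laplacian

variable {E : Type*} [NormedAddCommGroup E] [InnerProductSpace ℝ E] [FiniteDimensional ℝ E]
  (K : Submodule ℝ E) {x : E}

lemma sum_norm_sq_starProjection {ι : Type*} [Fintype ι] (b : OrthonormalBasis ι ℝ E) :
    ∑ i, ‖K.starProjection (b i)‖ ^ 2 = finrank ℝ K := by
  have hproj : LinearMap.IsProj K (K.starProjection : E →ₗ[ℝ] E) :=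
    ⟨K.starProjection_apply_mem, fun _ => K.starProjection_eq_self_iff.mpr⟩
  rw [← hproj.trace, LinearMap.trace_eq_sum_inner _ b]
  refine Finset.sum_congr rfl fun i _ => ?_
  rw [real_inner_comm, ContinuousLinearMap.coe_coe, inner_starProjection_self]

lemma laplacian_norm_sq_starProjection (x : E) :
    Δ (fun y => ‖K.starProjection y‖ ^ 2) x = 2 * finrank ℝ K := by
  let b := stdOrthonormalBasis ℝ E
  simp only [laplacian_eq_sum_fderiv_fderiv b, fderiv_fderiv_norm_sq_starProjection,
    ← Finset.mul_sum, sum_norm_sq_starProjection K b]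

lemma laplacian_norm_sq (x : E) : Δ (fun y : E => ‖y‖ ^ 2) x = 2 * finrank ℝ E := by
  simpa [Submodule.starProjection_top] using laplacian_norm_sq_starProjection (⊤ : Submodule ℝ E) x

variable {K}

lemma laplacian_norm_starProjection (hx : K.starProjection x ≠ 0) :
    Δ (fun y => ‖K.starProjection y‖) x = (finrank ℝ K - 1) / ‖K.starProjection x‖ := by
  have hr : ‖K.starProjection x‖ ≠ 0 := norm_ne_zero_iff.mpr hx
  have hsq : 2 * finrank ℝ K =
      2 * (1 + ‖K.starProjection x‖ * Δ (fun y => ‖K.starProjection y‖) x) := by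
    have h := laplacian_rpow_const (contDiffAt_norm_starProjection hx) hr 2
    norm_num [Real.rpow_two, laplacian_norm_sq_starProjection,
      norm_fderiv_norm_starProjection hx] at h
    linarith
  rw [eq_div_iff hr]
  linarith

end LaplacianProjection

section Bubble

open Module

variable {E : Type*} [NormedAddCommGroup E] [InnerProductSpace ℝ E]
  (K : Submodule ℝ E) [K.HasOrthogonalProjection] {x : E}

/-- The base `(1 + |z|)² + |t|²` of the cylindrical Hardy–Sobolev extremal for the singular set
`Kᗮ`, where `z` and `t` are the orthogonal projections of `x` onto `K` and `Kᗮ`. -/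
def cylBase (x : E) : ℝ :=
  (1 + ‖K.starProjection x‖) ^ 2 + ‖Kᗮ.starProjection x‖ ^ 2

/-- The cylindrical Hardy–Sobolev extremal with `σ = 1` on a Euclidean space of dimension `n`,
for a singular set `Kᗮ` of codimension `d = dim K`:
`[(n - 2)(d - 1)]^{(n-2)/2} ((1 + |z|)² + |t|²)^{(2-n)/2}`. -/
def cylBubble (x : E) : ℝ :=
  (((finrank ℝ E : ℝ) - 2) * (finrank ℝ K - 1)) ^ (((finrank ℝ E : ℝ) - 2) / 2) *
    cylBase K x ^ ((2 - (finrank ℝ E : ℝ)) / 2)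

lemma cylBase_eq (x : E) :
    cylBase K x = 1 + 2 * ‖K.starProjection x‖ + ‖x‖ ^ 2 := by
  rw [cylBase, K.norm_sq_eq_add_norm_sq_starProjection x]
  ring

lemma cylBase_pos (x : E) : 0 < cylBase K x := by
  rw [cylBase]
  positivity

variable {K}

lemma contDiffAt_cylBase {n : WithTop ℕ∞} (hx : K.starProjection x ≠ 0) :
    ContDiffAt ℝ n (cylBase K) x := by
  rw [funext (cylBase_eq K)]
  exact (contDiffAt_const.add (contDiffAt_const.mul (contDiffAt_norm_starProjection hx))).add
    (contDiff_norm_sq ℝ).contDiffAt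

lemma contDiffAt_cylBubble {n : WithTop ℕ∞} (hx : K.starProjection x ≠ 0) :
    ContDiffAt ℝ n (cylBubble K) x :=
  contDiffAt_const.mul ((contDiffAt_cylBase hx).rpow_const_of_ne (cylBase_pos K x).ne')

lemma hasFDerivAt_cylBase (hx : K.starProjection x ≠ 0) :
    HasFDerivAt (cylBase K)
      (innerSL ℝ ((2 : ℝ) • (x + ‖K.starProjection x‖⁻¹ • K.starProjection x))) x := by
  rw [funext (cylBase_eq K)]
  refine ((((hasFDerivAt_norm_starProjection hx).const_mul 2).const_add 1).add
    (hasStrictFDerivAt_norm_sq x).hasFDerivAt).congr_fderiv ?_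
  ext v
  simp only [map_smul, add_apply, smul_apply, coe_innerSL_apply, smul_eq_mul, nsmul_eq_mul,
    Nat.cast_ofNat, smul_add, map_add]
  ring

lemma norm_sq_fderiv_cylBase (hx : K.starProjection x ≠ 0) :
    ‖fderiv ℝ (cylBase K) x‖ ^ 2 = 4 * cylBase K x := by
  have hr : ‖K.starProjection x‖ ≠ 0 := norm_ne_zero_iff.mpr hx
  rw [(hasFDerivAt_cylBase hx).fderiv, innerSL_apply_norm, norm_smul, mul_pow, norm_add_sq_real,
    inner_smul_right, real_inner_comm, inner_starProjection_self, norm_smul,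
    norm_inv, norm_norm, Real.norm_ofNat, cylBase_eq]
  field_simp
  ring

end Bubble

section LaplacianBubble

open Module InnerProductSpace Laplacian

variable {E : Type*} [NormedAddCommGroup E] [InnerProductSpace ℝ E] [FiniteDimensional ℝ E]
  {K : Submodule ℝ E} {x : E}

lemma laplacian_cylBase (hx : K.starProjection x ≠ 0) :
    Δ (cylBase K) x =
      2 * finrank ℝ E + 2 * ((finrank ℝ K - 1) / ‖K.starProjection x‖) := by
  have hsum : cylBase K =
      (fun _ => (1 : ℝ)) + (2 : ℝ) • (fun y => ‖K.starProjection y‖) + fun y => ‖y‖ ^ 2 :=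
    funext (cylBase_eq K)
  have hz : ContDiffAt ℝ 2 (fun y => ‖K.starProjection y‖) x := contDiffAt_norm_starProjection hx
  have h2z : ContDiffAt ℝ 2 ((2 : ℝ) • fun y => ‖K.starProjection y‖) x :=
    contDiffAt_const.smul hz
  have h1 : ContDiffAt ℝ 2 (fun _ : E => (1 : ℝ)) x := contDiffAt_const
  have h12z : ContDiffAt ℝ 2 ((fun _ => (1 : ℝ)) + (2 : ℝ) • fun y => ‖K.starProjection y‖) x :=
    h1.add h2z
  rw [hsum, h12z.laplacian_add (contDiff_norm_sq ℝ).contDiffAt, h1.laplacian_add h2z,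
    laplacian_smul 2 hz, laplacian_norm_starProjection hx, laplacian_norm_sq, laplacian_const,
    Pi.zero_apply, smul_eq_mul]
  ring

lemma laplacian_cylBase_rpow (hx : K.starProjection x ≠ 0) (p : ℝ) :
    Δ (fun y => cylBase K y ^ p) x = p * cylBase K x ^ (p - 1) *
      (4 * (p - 1) + 2 * finrank ℝ E + 2 * ((finrank ℝ K - 1) / ‖K.starProjection x‖)) := by
  have hpow : cylBase K x ^ (p - 1) = cylBase K x ^ (p - 2) * cylBase K x := by
    rw [← Real.rpow_add_one (cylBase_pos K x).ne']
    ring_nf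
  rw [laplacian_rpow_const (contDiffAt_cylBase hx) (cylBase_pos K x).ne', norm_sq_fderiv_cylBase hx,
    laplacian_cylBase hx, hpow]
  ring

lemma neg_laplacian_cylBubble (hx : K.starProjection x ≠ 0) :
    -Δ (cylBubble K) x = ‖K.starProjection x‖⁻¹ *
      ((((finrank ℝ E : ℝ) - 2) * (finrank ℝ K - 1)) ^ (((finrank ℝ E : ℝ) - 2) / 2) *
        (((finrank ℝ E : ℝ) - 2) * (finrank ℝ K - 1)) *
        cylBase K x ^ ((2 - (finrank ℝ E : ℝ)) / 2 - 1)) := by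
  have hsmul : cylBubble K =
      (((finrank ℝ E : ℝ) - 2) * (finrank ℝ K - 1)) ^ (((finrank ℝ E : ℝ) - 2) / 2) •
        fun y => cylBase K y ^ ((2 - (finrank ℝ E : ℝ)) / 2) := rfl
  rw [hsmul, laplacian_smul _ ((contDiffAt_cylBase hx).rpow_const_of_ne (cylBase_pos K x).ne'),
    laplacian_cylBase_rpow hx, smul_eq_mul]
  ring

lemma mul_rpow_critical_exponent {A P n : ℝ} (hA : 0 ≤ A) (hP : 0 < P) (hn : 2 < n) :
    (A ^ ((n - 2) / 2) * P ^ ((2 - n) / 2)) ^ (n / (n - 2)) =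
      A ^ ((n - 2) / 2) * A * P ^ ((2 - n) / 2 - 1) := by
  have hn2 : 0 < n - 2 := sub_pos.mpr hn
  have hAexp : (n - 2) / 2 * (n / (n - 2)) = (n - 2) / 2 + 1 := by field_simp; ring
  have hPexp : (2 - n) / 2 * (n / (n - 2)) = (2 - n) / 2 - 1 := by field_simp; ring
  rw [Real.mul_rpow (Real.rpow_nonneg hA _) (Real.rpow_nonneg hP.le _), ← Real.rpow_mul hA,
    ← Real.rpow_mul hP.le, hAexp, hPexp, Real.rpow_add_one' hA (by positivity)]

theorem statement10_general (hE : 3 ≤ finrank ℝ E) (hx : K.starProjection x ≠ 0) :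
    -Δ (cylBubble K) x = ‖K.starProjection x‖⁻¹ *
      cylBubble K x ^ ((finrank ℝ E : ℝ) / ((finrank ℝ E : ℝ) - 2)) := by
  have hn : (3 : ℝ) ≤ finrank ℝ E := by exact_mod_cast hE
  have hd : (1 : ℝ) ≤ finrank ℝ K := by
    have hK : K ≠ ⊥ := K.ne_bot_iff.mpr ⟨_, K.starProjection_apply_mem x, hx⟩
    exact_mod_cast Submodule.one_le_finrank_iff.mpr hK
  have hA : 0 ≤ ((finrank ℝ E : ℝ) - 2) * (finrank ℝ K - 1) :=
    mul_nonneg (by linarith) (by linarith)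
  rw [neg_laplacian_cylBubble hx, cylBubble,
    mul_rpow_critical_exponent hA (cylBase_pos K x) (by linarith)]

end LaplacianBubble

section Coordinates

open Module

variable {ι : Type*} (p : ι → Prop)

/-- The coordinate subspace of vectors supported on the indices satisfying `p`. -/
def coordSubspace : Submodule ℝ (EuclideanSpace ℝ ι) where
  carrier := {x | ∀ i, ¬ p i → x i = 0}
  add_mem' hx hy i hi := by simp [hx i hi, hy i hi]
  zero_mem' _ _ := rfl
  smul_mem' c x hx i hi := by simp [hx i hi]

variable [Fintype ι] [DecidablePred p]

lemma starProjection_coordSubspace_apply (x : EuclideanSpace ℝ ι) (i : ι) :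
    (coordSubspace p).starProjection x i = if p i then x i else 0 := by
  let z : EuclideanSpace ℝ ι := WithLp.toLp 2 fun i => if p i then x i else 0
  suffices (coordSubspace p).starProjection x = z by rw [this]
  refine Submodule.eq_starProjection_of_mem_of_inner_eq_zero (fun i hi => if_neg hi) fun w hw => ?_
  rw [PiLp.inner_apply]
  refine Finset.sum_eq_zero fun i _ => ?_
  by_cases hi : p i
  · simp [z, hi]
  · simp [hw i hi]

lemma norm_starProjection_coordSubspace (x : EuclideanSpace ℝ ι) :
    ‖(coordSubspace p).starProjection x‖ = √(∑ i, if p i then x i ^ 2 else 0) := by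
  simp [EuclideanSpace.norm_eq, starProjection_coordSubspace_apply, apply_ite (· ^ 2),
    apply_ite abs]

lemma norm_starProjection_coordSubspace_orthogonal (x : EuclideanSpace ℝ ι) :
    ‖(coordSubspace p)ᗮ.starProjection x‖ = √(∑ i, if p i then 0 else x i ^ 2) := by
  rw [EuclideanSpace.norm_eq]
  congr 1
  refine Finset.sum_congr rfl fun i _ => ?_
  by_cases hi : p i <;>
    simp [Submodule.starProjection_orthogonal_val, starProjection_coordSubspace_apply, hi]

lemma finrank_coordSubspace : finrank ℝ (coordSubspace p) = Fintype.card {i // p i} := by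
  classical
  have hnorm (i : ι) :
      ‖(coordSubspace p).starProjection (EuclideanSpace.basisFun ι ℝ i)‖ ^ 2 =
        if p i then 1 else 0 := by
    rw [← inner_starProjection_self, EuclideanSpace.basisFun_apply,
      EuclideanSpace.inner_single_right]
    simp [starProjection_coordSubspace_apply]
  have hsum := sum_norm_sq_starProjection (coordSubspace p) (EuclideanSpace.basisFun ι ℝ)
  simp only [hnorm, Finset.sum_boole, ← Fintype.card_subtype] at hsum
  exact_mod_cast hsum.symm

end Coordinates

section Cylindrical

open Module Laplacian

lemma lapl_eq_laplacian {N : ℕ} {f : Euc N → ℝ} {x : Euc N} (hf : ContDiffAt ℝ 2 f x) :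
    lapl N f x = Δ f x := by
  simp [lapl, laplacian_eq_sum_fderiv_fderiv (EuclideanSpace.basisFun (Fin N) ℝ),
    fderiv_fderiv_apply hf]

/-- The subspace `{0} × ℝ^{N-k}` of the `z`-variable in `ℝ^N = ℝ^k × ℝ^{N-k}`. -/
abbrev zSubspace (N k : ℕ) : Submodule ℝ (Euc N) := coordSubspace fun i : Fin N => k ≤ (i : ℕ)

lemma zNorm_eq_norm_starProjection (N k : ℕ) (x : Euc N) :
    zNorm N k x = ‖(zSubspace N k).starProjection x‖ :=
  (norm_starProjection_coordSubspace _ x).symm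

lemma tNorm_eq_norm_starProjection_orthogonal (N k : ℕ) (x : Euc N) :
    tNorm N k x = ‖(zSubspace N k)ᗮ.starProjection x‖ := by
  rw [tNorm, norm_starProjection_coordSubspace_orthogonal]
  simp only [← not_le, ite_not]

lemma finrank_zSubspace (N k : ℕ) : finrank ℝ (zSubspace N k) = N - k := by
  rw [finrank_coordSubspace]
  simp only [← not_lt]
  rw [Fintype.card_subtype_compl, Fintype.card_fin, Fintype.card_subtype, Fin.card_filter_val_lt]
  omega

lemma wCyl_eq_cylBubble {N k : ℕ} (hk : k ≤ N) : wCyl N k = cylBubble (zSubspace N k) := by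
  ext x
  simp [wCyl, cylBubble, cylBase, zNorm_eq_norm_starProjection,
    tNorm_eq_norm_starProjection_orthogonal, finrank_zSubspace, Nat.cast_sub hk]

end Cylindrical

/-- For `N ≥ 3` and `1 ≤ k ≤ N-2`, the function `wCyl N k` satisfies
`-Δw = |z|⁻¹ w^{N/(N-2)}` pointwise on `{z ≠ 0}`; note `N/(N-2) = 2*_1 - 1`. -/
theorem statement10 (N k : ℕ) (hN : 3 ≤ N) (hk1 : 1 ≤ k) (hk2 : k ≤ N - 2) :
    ∀ x : Euc N, zNorm N k x ≠ 0 →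
      -lapl N (wCyl N k) x =
        (zNorm N k x)⁻¹ * wCyl N k x ^ ((N : ℝ) / ((N : ℝ) - 2)) := by
  intro x hx
  rw [zNorm_eq_norm_starProjection, norm_ne_zero_iff] at hx
  rw [wCyl_eq_cylBubble (by omega), lapl_eq_laplacian (contDiffAt_cylBubble hx),
    zNorm_eq_norm_starProjection]
  simpa using statement10_general (by simpa using hN) hx
end
end

section
/- Let N ≥ 5, 1 ≤ k ≤ N−2 and σ ∈ (0,2), and let w be a positive ground state for S_{N,σ}. Then the integrals ∫_{ℝ^N} |z|² |∇w|² dx, ∫_{ℝ^N} w² dx and ∫_{ℝ^N} |z|^{2−σ} w^{2*_σ} dx are finite and S_{N,σ} ∫_{ℝ^N} |z|^{2−σ} w^{2*_σ} dx = ∫_{ℝ^N} |z|² |∇w|² dx − (N−k) ∫_{ℝ^N} w² dx. -/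
open MeasureTheory Filter Metric Set Bornology
open scoped Manifold

noncomputable section

/-!
A ground state is an extremal of a weighted Sobolev inequality `S (∫ ρ |φ|^q)^{2/q} ≤ ∫ |∇φ|²`.
Perturbing `w` to `(1 + t h) w` gives the Euler–Lagrange equation `∫ ∇w · ∇(h w) = S ∫ h ρ w^q` for
smooth `h` with `h` and `⟨x⟩ |∇h|` bounded, where `⟨x⟩ = √(1 + |x|²)`.

Decay: take `h = η²` with `η` a truncation of `⟨x⟩`. Then
`∫ |∇(η w)|² = S ∫ η² ρ w^q + ∫ w² |∇η|²`. Away from a large ball, Hölder's inequality bounds the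
first term on the right by a third of the left side, because `∫ ρ w^q` has small tails, and Hardy's
inequality bounds the second one by `(2 / (N - 2))² ≤ 4 / 9` of it. Since `1 / 3 + 4 / 9 < 1` both
are absorbed, and removing the truncation shows that `w²`, `⟨x⟩² |∇w|²` and `⟨x⟩² ρ w^q` are
integrable.

Identity: this decay permits `h = ⟪v, x⟫²` in the Euler–Lagrange equation, and integrating
`2 w ⟪∇w, v⟫ ⟪v, x⟫ = ⟪∇(w²), v⟫ ⟪v, x⟫` by parts gives
`S ∫ ⟪v, x⟫² ρ w^q = ∫ ⟪v, x⟫² |∇w|² - |v|² ∫ w²`. Summing over the `N - k` coordinate directions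
`v` of `z` turns `⟪v, x⟫²` into `|z|²`.
-/

open scoped ContDiff ENNReal Gradient Topology

namespace HardySobolev

/-! ### Integrals of limits -/

section Integration

variable {α : Type*} [MeasurableSpace α] {μ : Measure α}

theorem integrable_and_integral_le_of_tendsto {F : ℕ → α → ℝ} {f : α → ℝ} {M : ℕ → ℝ} {L : ℝ}
    (hF : ∀ n, Integrable (F n) μ) (hF0 : ∀ n x, 0 ≤ F n x)
    (hlim : ∀ᵐ x ∂μ, Tendsto (fun n ↦ F n x) atTop (𝓝 (f x)))
    (hM : ∀ n, ∫ x, F n x ∂μ ≤ M n) (hL : Tendsto M atTop (𝓝 L)) :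
    Integrable f μ ∧ ∫ x, f x ∂μ ≤ L := by
  have hf0 : 0 ≤ᵐ[μ] f := by
    filter_upwards [hlim] with x hx using ge_of_tendsto' hx fun n ↦ hF0 n x
  have hfm : AEStronglyMeasurable f μ :=
    aestronglyMeasurable_of_tendsto_ae _ (fun n ↦ (hF n).aestronglyMeasurable) hlim
  have hfatou : ∫⁻ x, ENNReal.ofReal (f x) ∂μ ≤ ENNReal.ofReal L :=
    calc ∫⁻ x, ENNReal.ofReal (f x) ∂μ
        = ∫⁻ x, liminf (fun n ↦ ENNReal.ofReal (F n x)) atTop ∂μ := by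
          refine lintegral_congr_ae ?_
          filter_upwards [hlim] with x hx using (ENNReal.tendsto_ofReal hx).liminf_eq.symm
      _ ≤ liminf (fun n ↦ ∫⁻ x, ENNReal.ofReal (F n x) ∂μ) atTop :=
          lintegral_liminf_le' fun n ↦ (hF n).aemeasurable.ennreal_ofReal
      _ ≤ liminf (fun n ↦ ENNReal.ofReal (M n)) atTop := by
          refine liminf_le_liminf (Eventually.of_forall fun n ↦ ?_)
          rw [← ofReal_integral_eq_lintegral_ofReal (hF n) (ae_of_all _ (hF0 n))]
          exact ENNReal.ofReal_le_ofReal (hM n)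
      _ = ENNReal.ofReal L := (ENNReal.tendsto_ofReal hL).liminf_eq
  have hL0 : 0 ≤ L := ge_of_tendsto' hL fun n ↦ (integral_nonneg (hF0 n)).trans (hM n)
  refine ⟨(lintegral_ofReal_ne_top_iff_integrable hfm hf0).1
    (ne_top_of_le_ne_top ENNReal.ofReal_ne_top hfatou), ?_⟩
  rw [integral_eq_lintegral_of_nonneg_ae hf0 hfm]
  exact ENNReal.toReal_le_of_le_ofReal hL0 hfatou

theorem integral_rpow_mul_rpow_le {f g : α → ℝ} (hf : Integrable f μ) (hg : Integrable g μ)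
    (hf0 : ∀ x, 0 ≤ f x) (hg0 : ∀ x, 0 ≤ g x) {p q : ℝ} (hp : 0 ≤ p) (hq : 0 ≤ q)
    (hpq : p + q = 1) :
    ∫ x, f x ^ p * g x ^ q ∂μ ≤ (∫ x, f x ∂μ) ^ p * (∫ x, g x ∂μ) ^ q := by
  have hfi : 0 ≤ ∫ x, f x ∂μ := integral_nonneg hf0
  have hgi : 0 ≤ ∫ x, g x ∂μ := integral_nonneg hg0
  rw [integral_eq_lintegral_of_nonneg_ae
    (ae_of_all _ fun x ↦ mul_nonneg (Real.rpow_nonneg (hf0 x) p) (Real.rpow_nonneg (hg0 x) q))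
    ((hf.aemeasurable.pow_const p).mul (hg.aemeasurable.pow_const q)).aestronglyMeasurable]
  refine ENNReal.toReal_le_of_le_ofReal (by positivity) ?_
  calc ∫⁻ x, ENNReal.ofReal (f x ^ p * g x ^ q) ∂μ
      = ∫⁻ x, ENNReal.ofReal (f x) ^ p * ENNReal.ofReal (g x) ^ q ∂μ := by
        simp only [ENNReal.ofReal_mul (Real.rpow_nonneg (hf0 _) p),
          ENNReal.ofReal_rpow_of_nonneg (hf0 _) hp, ENNReal.ofReal_rpow_of_nonneg (hg0 _) hq]
    _ ≤ (∫⁻ x, ENNReal.ofReal (f x) ∂μ) ^ p * (∫⁻ x, ENNReal.ofReal (g x) ∂μ) ^ q :=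
        ENNReal.lintegral_mul_norm_pow_le hf.aemeasurable.ennreal_ofReal
          hg.aemeasurable.ennreal_ofReal hp hq hpq
    _ = ENNReal.ofReal ((∫ x, f x ∂μ) ^ p * (∫ x, g x ∂μ) ^ q) := by
        rw [← ofReal_integral_eq_lintegral_ofReal hf (ae_of_all _ hf0),
          ← ofReal_integral_eq_lintegral_ofReal hg (ae_of_all _ hg0),
          ENNReal.ofReal_mul (by positivity), ENNReal.ofReal_rpow_of_nonneg hfi hp,
          ENNReal.ofReal_rpow_of_nonneg hgi hq]

theorem tendsto_setIntegral_compl_closedBall {X : Type*} [PseudoMetricSpace X] [MeasurableSpace X]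
    [OpensMeasurableSpace X] {ν : Measure X} {f : X → ℝ} (hf : Integrable f ν) (c : X) :
    Tendsto (fun n : ℕ ↦ ∫ x in (closedBall c n)ᶜ, f x ∂ν) atTop (𝓝 0) := by
  have hempty : ⋂ n : ℕ, (closedBall c (n : ℝ))ᶜ = ∅ := by
    rw [← compl_iUnion, iUnion_closedBall_nat, compl_univ]
  have h := tendsto_setIntegral_of_antitone (μ := ν) (f := f)
    (fun n : ℕ ↦ (measurableSet_closedBall (x := c) (ε := n)).compl)
    (fun m n hmn ↦ compl_subset_compl.2 (closedBall_subset_closedBall (by exact_mod_cast hmn)))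
    ⟨0, hf.integrableOn⟩
  simpa only [hempty, setIntegral_empty] using h

theorem tendsto_eLpNorm_of_norm_le {ι V V' : Type*} [NormedAddCommGroup V]
    [NormedAddCommGroup V'] {l : Filter ι} {p : ℝ≥0∞} {f : ι → α → V} {g : ι → α → V'} {C : ℝ}
    (hg : Tendsto (fun i ↦ eLpNorm (g i) p μ) l (𝓝 0)) (hfg : ∀ i x, ‖f i x‖ ≤ C * ‖g i x‖) :
    Tendsto (fun i ↦ eLpNorm (f i) p μ) l (𝓝 0) := by
  refine tendsto_of_tendsto_of_tendsto_of_le_of_le tendsto_const_nhds ?_ (fun _ ↦ zero_le)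
    fun i ↦ eLpNorm_le_mul_eLpNorm_of_ae_le_mul (ae_of_all μ (hfg i)) p
  simpa using ENNReal.Tendsto.const_mul hg (Or.inr ENNReal.ofReal_ne_top)

theorem tendsto_eLpNorm_add {ι V : Type*} [NormedAddCommGroup V] {l : Filter ι} {p : ℝ≥0∞}
    (hp : 1 ≤ p) {f g : ι → α → V} (hfm : ∀ i, AEStronglyMeasurable (f i) μ)
    (hgm : ∀ i, AEStronglyMeasurable (g i) μ) (hf : Tendsto (fun i ↦ eLpNorm (f i) p μ) l (𝓝 0))
    (hg : Tendsto (fun i ↦ eLpNorm (g i) p μ) l (𝓝 0)) :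
    Tendsto (fun i ↦ eLpNorm (f i + g i) p μ) l (𝓝 0) :=
  tendsto_of_tendsto_of_tendsto_of_le_of_le tendsto_const_nhds (by simpa using hf.add hg)
    (fun _ ↦ zero_le) fun i ↦ eLpNorm_add_le (hfm i) (hgm i) hp

theorem memLp_of_tendsto_eLpNorm_sub {ι V : Type*} [NormedAddCommGroup V] {l : Filter ι} [l.NeBot]
    {p : ℝ≥0∞} {f : ι → α → V} {f₀ : α → V} (hf : ∀ i, MemLp (f i) p μ)
    (hf₀ : AEStronglyMeasurable f₀ μ) (h : Tendsto (fun i ↦ eLpNorm (f i - f₀) p μ) l (𝓝 0)) :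
    MemLp f₀ p μ := by
  obtain ⟨i, hi⟩ := (h.eventually_lt_const ENNReal.zero_lt_top).exists
  simpa using (hf i).sub ⟨(hf i).1.sub hf₀, hi⟩

theorem memLp_smul_of_norm_le {V : Type*} [NormedAddCommGroup V] [NormedSpace ℝ V] {p : ℝ≥0∞}
    {a : α → ℝ} {m : α → V} {C : ℝ} (ha : MemLp a p μ) (hm : AEStronglyMeasurable m μ)
    (hC : ∀ x, ‖m x‖ ≤ C) : MemLp (fun x ↦ a x • m x) p μ :=
  ha.of_le_mul (ha.1.smul hm) (ae_of_all _ fun x ↦ by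
    rw [norm_smul, mul_comm]
    exact mul_le_mul_of_nonneg_right (hC x) (norm_nonneg _))

theorem tendsto_eLpNorm_smul_sub {ι V : Type*} [NormedAddCommGroup V] [NormedSpace ℝ V]
    {l : Filter ι} {p : ℝ≥0∞} {a : ι → α → ℝ} {a₀ : α → ℝ} {m : α → V} {C : ℝ}
    (ha : Tendsto (fun i ↦ eLpNorm (a i - a₀) p μ) l (𝓝 0)) (hC : ∀ x, ‖m x‖ ≤ C) :
    Tendsto (fun i ↦ eLpNorm ((fun x ↦ a i x • m x) - fun x ↦ a₀ x • m x) p μ) l (𝓝 0) :=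
  tendsto_eLpNorm_of_norm_le ha fun i x ↦ by
    rw [Pi.sub_apply, Pi.sub_apply, ← sub_smul, norm_smul, mul_comm]
    exact mul_le_mul_of_nonneg_right (hC x) (norm_nonneg _)

variable {V : Type*} [NormedAddCommGroup V] [InnerProductSpace ℝ V]

theorem integrable_inner {f g : α → V} (hf : MemLp f 2 μ) (hg : MemLp g 2 μ) :
    Integrable (fun x ↦ inner ℝ (f x) (g x)) μ := by
  refine (L2.integrable_inner (𝕜 := ℝ) (hf.toLp f) (hg.toLp g)).congr ?_
  filter_upwards [hf.coeFn_toLp, hg.coeFn_toLp] with x hfx hgx using by rw [hfx, hgx]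

theorem tendsto_integral_inner {ι : Type*} {l : Filter ι} {f g : ι → α → V} {f₀ g₀ : α → V}
    (hf : ∀ i, MemLp (f i) 2 μ) (hg : ∀ i, MemLp (g i) 2 μ) (hf₀ : MemLp f₀ 2 μ)
    (hg₀ : MemLp g₀ 2 μ) (hff₀ : Tendsto (fun i ↦ eLpNorm (f i - f₀) 2 μ) l (𝓝 0))
    (hgg₀ : Tendsto (fun i ↦ eLpNorm (g i - g₀) 2 μ) l (𝓝 0)) :
    Tendsto (fun i ↦ ∫ x, inner ℝ (f i x) (g i x) ∂μ) l (𝓝 (∫ x, inner ℝ (f₀ x) (g₀ x) ∂μ)) := by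
  have hinner {a b : α → V} (ha : MemLp a 2 μ) (hb : MemLp b 2 μ) :
      ∫ x, inner ℝ (a x) (b x) ∂μ = inner ℝ (ha.toLp a) (hb.toLp b) := by
    rw [L2.inner_def]
    refine integral_congr_ae ?_
    filter_upwards [ha.coeFn_toLp, hb.coeFn_toLp] with x hax hbx using by rw [hax, hbx]
  simp only [hinner (hf _) (hg _), hinner hf₀ hg₀]
  exact ((Lp.tendsto_Lp_iff_tendsto_eLpNorm'' f hf f₀ hf₀).2 hff₀).inner
    ((Lp.tendsto_Lp_iff_tendsto_eLpNorm'' g hg g₀ hg₀).2 hgg₀)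

theorem tendsto_integral_norm_sq {ι : Type*} {l : Filter ι} {f : ι → α → V} {f₀ : α → V}
    (hf : ∀ i, MemLp (f i) 2 μ) (hf₀ : MemLp f₀ 2 μ)
    (hff₀ : Tendsto (fun i ↦ eLpNorm (f i - f₀) 2 μ) l (𝓝 0)) :
    Tendsto (fun i ↦ ∫ x, ‖f i x‖ ^ 2 ∂μ) l (𝓝 (∫ x, ‖f₀ x‖ ^ 2 ∂μ)) := by
  simpa only [real_inner_self_eq_norm_sq] using tendsto_integral_inner hf hf hf₀ hf₀ hff₀ hff₀

theorem integral_norm_add_smul_sq {f g : α → V} (hf : MemLp f 2 μ) (hg : MemLp g 2 μ) (t : ℝ) :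
    ∫ x, ‖f x + t • g x‖ ^ 2 ∂μ =
      ∫ x, ‖f x‖ ^ 2 ∂μ + 2 * t * ∫ x, inner ℝ (f x) (g x) ∂μ + t ^ 2 * ∫ x, ‖g x‖ ^ 2 ∂μ := by
  have hexpand (x : α) : ‖f x + t • g x‖ ^ 2 =
      ‖f x‖ ^ 2 + 2 * t * inner ℝ (f x) (g x) + t ^ 2 * ‖g x‖ ^ 2 := by
    rw [norm_add_sq_real, real_inner_smul_right, norm_smul, mul_pow, Real.norm_eq_abs, sq_abs]
    ring
  have hf2 := hf.integrable_norm_pow two_ne_zero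
  have hg2 := hg.integrable_norm_pow two_ne_zero
  have hfg := (integrable_inner hf hg).const_mul (2 * t)
  have hf2fg : Integrable (fun x ↦ ‖f x‖ ^ 2 + 2 * t * inner ℝ (f x) (g x)) μ := hf2.add hfg
  simp only [hexpand]
  rw [integral_add hf2fg (hg2.const_mul _), integral_add hf2 hfg, integral_const_mul,
    integral_const_mul]

end Integration

theorem eq_mul_of_eventually_rpow_le {S q a b c : ℝ} (hq : q ≠ 0)
    (h : ∀ᶠ t in 𝓝 0, S * (1 + q * (t * a)) ^ (2 / q) ≤ S + 2 * t * b + t ^ 2 * c) :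
    b = S * a := by
  have hmin : IsLocalMin
      (fun t ↦ S + 2 * t * b + t ^ 2 * c - S * (1 + q * (t * a)) ^ (2 / q)) 0 := by
    filter_upwards [h] with t ht
    simpa using ht
  have hbase : HasDerivAt (fun t : ℝ ↦ 1 + q * (t * a)) (q * (1 * a)) 0 :=
    (((hasDerivAt_id 0).mul_const a).const_mul q).const_add 1
  have hderiv : HasDerivAt (fun t ↦ S + 2 * t * b + t ^ 2 * c - S * (1 + q * (t * a)) ^ (2 / q))
      (2 * (b - S * a)) 0 := by
    refine ((((((hasDerivAt_id (0 : ℝ)).const_mul 2).mul_const b).const_add S).add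
      (((hasDerivAt_id (0 : ℝ)).pow 2).mul_const c)).sub
      ((hbase.rpow_const (p := 2 / q) (Or.inl (by simp))).const_mul S)).congr_deriv ?_
    simp only [id_eq, mul_zero, zero_mul, add_zero, Real.one_rpow]
    field_simp
    ring
  linarith [hmin.hasDerivAt_eq_zero hderiv]

/-! ### Gradients, the Japanese bracket and cutoffs -/

section Gradient

variable {F : Type*} [NormedAddCommGroup F] [InnerProductSpace ℝ F] [CompleteSpace F]
  {f g : F → ℝ} {x : F}

theorem norm_gradient : ‖∇ f x‖ = ‖fderiv ℝ f x‖ := by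
  rw [← toDual_gradient, LinearIsometryEquiv.norm_map]

theorem continuous_gradient (hf : ContDiff ℝ 1 f) : Continuous (∇ f) :=
  (InnerProductSpace.toDual ℝ F).symm.continuous.comp (hf.continuous_fderiv one_ne_zero)

theorem gradient_sub (hf : DifferentiableAt ℝ f x) (hg : DifferentiableAt ℝ g x) :
    ∇ (fun y ↦ f y - g y) x = ∇ f x - ∇ g x := by
  simp only [gradient, fderiv_fun_sub hf hg, map_sub]

theorem gradient_mul (hf : DifferentiableAt ℝ f x) (hg : DifferentiableAt ℝ g x) :
    ∇ (fun y ↦ f y * g y) x = f x • ∇ g x + g x • ∇ f x := by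
  simp only [gradient, fderiv_fun_mul hf hg, map_add, map_smul]

theorem gradient_const_add_const_mul (hf : DifferentiableAt ℝ f x) (a b : ℝ) :
    ∇ (fun y ↦ a + b * f y) x = b • ∇ f x := by
  simp only [gradient, fderiv_const_add, fderiv_const_mul hf, map_smul]

theorem gradient_sq (hf : DifferentiableAt ℝ f x) : ∇ (fun y ↦ f y ^ 2) x = (2 * f x) • ∇ f x := by
  simp only [pow_two, gradient_mul hf hf, two_mul, add_smul]

theorem hasGradientAt_inner_left (v x : F) : HasGradientAt (fun y ↦ inner ℝ v y) v x := by
  rw [hasGradientAt_iff_hasFDerivAt]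
  exact ((InnerProductSpace.toDual ℝ F) v).hasFDerivAt

theorem hasGradientAt_norm_sq (x : F) : HasGradientAt (fun y ↦ ‖y‖ ^ 2) ((2 : ℝ) • x) x := by
  rw [hasGradientAt_iff_hasFDerivAt]
  refine (hasStrictFDerivAt_norm_sq x).hasFDerivAt.congr_fderiv ?_
  ext y
  simp

theorem hasGradientAt_comp {φ : ℝ → ℝ} {φ' : ℝ} {f' : F} (hφ : HasDerivAt φ φ' (f x))
    (hf : HasGradientAt f f' x) : HasGradientAt (fun y ↦ φ (f y)) (φ' • f') x := by
  rw [hasGradientAt_iff_hasFDerivAt, map_smul]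
  exact hφ.comp_hasFDerivAt x hf.hasFDerivAt

end Gradient

section Bracket

variable {F : Type*} [NormedAddCommGroup F]

/-- The Japanese bracket `⟨x⟩ = √(1 + ‖x‖²)`, a smooth substitute for `1 + ‖x‖`. -/
def bracket (x : F) : ℝ := √(1 + ‖x‖ ^ 2)

/-- The rational cutoff `(1 + ‖x‖² / (n + 1))⁻¹`, equal to `⟨x⟩⁻²` for `n = 0` and increasing to
`1` as `n → ∞`. Being scale free, it spares the use of compactly supported cutoffs. -/
def cutoff (n : ℕ) (x : F) : ℝ := (1 + ‖x‖ ^ 2 / (n + 1))⁻¹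

/-- The bounded smooth weight `⟨x⟩ * cutoff n x`, which increases to `⟨x⟩` as `n → ∞`. -/
def truncBracket (n : ℕ) (x : F) : ℝ := bracket x * cutoff n x

variable (n : ℕ) (x : F)

theorem bracket_sq : bracket x ^ 2 = 1 + ‖x‖ ^ 2 := Real.sq_sqrt (by positivity)

theorem one_le_bracket : 1 ≤ bracket x := Real.one_le_sqrt.2 (by nlinarith [sq_nonneg ‖x‖])

theorem bracket_pos : 0 < bracket x := one_pos.trans_le (one_le_bracket x)

theorem norm_le_bracket : ‖x‖ ≤ bracket x := Real.le_sqrt_of_sq_le (by linarith)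

theorem cutoff_zero : cutoff 0 x = (bracket x ^ 2)⁻¹ := by simp [cutoff, bracket_sq]

theorem cutoff_pos : 0 < cutoff n x := by unfold cutoff; positivity

theorem cutoff_le_one : cutoff n x ≤ 1 :=
  inv_le_one_of_one_le₀ (le_add_of_nonneg_right (by positivity))

theorem tendsto_cutoff : Tendsto (fun n ↦ cutoff n x) atTop (𝓝 1) := by
  have h : Tendsto (fun n : ℕ ↦ ‖x‖ ^ 2 / ((n : ℝ) + 1)) atTop (𝓝 0) :=
    tendsto_const_nhds.div_atTop (tendsto_natCast_atTop_atTop.atTop_add tendsto_const_nhds)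
  simpa [cutoff] using (h.const_add 1).inv₀ (by simp)

theorem bracket_sq_mul_cutoff_le : bracket x ^ 2 * cutoff n x ≤ n + 1 := by
  rw [bracket_sq, cutoff, ← div_eq_mul_inv, div_le_iff₀ (by positivity)]
  calc 1 + ‖x‖ ^ 2 ≤ (n + 1) + ‖x‖ ^ 2 := by gcongr; linarith [n.cast_nonneg (α := ℝ)]
    _ = (n + 1) * (1 + ‖x‖ ^ 2 / (n + 1)) := by field_simp

theorem abs_mul_cutoff_le (s : ℝ) : |s * cutoff n x| ≤ |s| := by
  rw [abs_mul, abs_of_pos (cutoff_pos n x)]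
  exact mul_le_of_le_one_right (abs_nonneg s) (cutoff_le_one n x)

theorem truncBracket_nonneg : 0 ≤ truncBracket n x :=
  mul_nonneg (bracket_pos x).le (cutoff_pos n x).le

theorem truncBracket_le_bracket : truncBracket n x ≤ bracket x :=
  mul_le_of_le_one_right (bracket_pos x).le (cutoff_le_one n x)

theorem truncBracket_le : truncBracket n x ≤ n + 1 := by
  refine le_trans ?_ (bracket_sq_mul_cutoff_le n x)
  exact mul_le_mul_of_nonneg_right (le_self_pow₀ (one_le_bracket x) two_ne_zero) (cutoff_pos n x).le

theorem abs_truncBracket_le : |truncBracket n x| ≤ n + 1 := by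
  rw [abs_of_nonneg (truncBracket_nonneg n x)]
  exact truncBracket_le n x

theorem tendsto_truncBracket : Tendsto (fun n ↦ truncBracket n x) atTop (𝓝 (bracket x)) := by
  simpa [truncBracket] using (tendsto_cutoff x).const_mul (bracket x)

variable {x} in
theorem bracket_pow_mul_abs_mul_cutoff_le {s C : ℝ} {l m : ℕ} (hlm : l + m = 2)
    (hs : |s| ≤ C * bracket x ^ m) : bracket x ^ l * |s * cutoff n x| ≤ C * (n + 1) := by
  have hc := cutoff_pos n x
  have hb := bracket_pos x
  have hC : 0 ≤ C := nonneg_of_mul_nonneg_left ((abs_nonneg s).trans hs) (by positivity)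
  calc bracket x ^ l * |s * cutoff n x| = bracket x ^ l * (|s| * cutoff n x) := by
        rw [abs_mul, abs_of_pos hc]
    _ ≤ bracket x ^ l * (C * bracket x ^ m * cutoff n x) := by gcongr
    _ = C * (bracket x ^ (l + m) * cutoff n x) := by ring
    _ ≤ C * (n + 1) := by rw [hlm]; gcongr; exact bracket_sq_mul_cutoff_le n x

variable [InnerProductSpace ℝ F]

theorem abs_inner_sq_le (v : F) : |inner ℝ v x ^ 2| ≤ ‖v‖ ^ 2 * bracket x ^ 2 := by
  rw [abs_pow, ← mul_pow]
  gcongr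
  exact (abs_real_inner_le_norm v x).trans (by gcongr; exact norm_le_bracket x)

theorem contDiff_bracket : ContDiff ℝ ∞ (bracket : F → ℝ) :=
  (contDiff_const.add (contDiff_norm_sq ℝ)).sqrt fun x ↦ by positivity

theorem contDiff_cutoff : ContDiff ℝ ∞ (cutoff n : F → ℝ) :=
  (contDiff_const.add ((contDiff_norm_sq ℝ).div_const _)).inv fun x ↦ by positivity

theorem differentiableAt_cutoff : DifferentiableAt ℝ (cutoff n) x :=
  (contDiff_cutoff n).differentiable (by simp) x

theorem continuous_bracket : Continuous (bracket : F → ℝ) := contDiff_bracket.continuous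

theorem contDiff_truncBracket : ContDiff ℝ ∞ (truncBracket n : F → ℝ) :=
  contDiff_bracket.mul (contDiff_cutoff n)

variable [CompleteSpace F]

theorem hasGradientAt_bracket : HasGradientAt bracket ((bracket x)⁻¹ • x) x := by
  have hsqrt : HasDerivAt (fun s ↦ √(1 + s)) (1 / (2 * √(1 + ‖x‖ ^ 2))) (‖x‖ ^ 2) :=
    ((hasDerivAt_id _).const_add 1).sqrt (by positivity)
  have hsmul : (1 / (2 * √(1 + ‖x‖ ^ 2))) • (2 : ℝ) • x = (bracket x)⁻¹ • x := by
    rw [smul_smul, bracket]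
    congr 1
    field_simp
  exact hsmul ▸ hasGradientAt_comp (f := fun y ↦ ‖y‖ ^ 2) hsqrt (hasGradientAt_norm_sq x)

theorem gradient_cutoff : ∇ (cutoff n) x = -(2 / (n + 1) * cutoff n x ^ 2) • x := by
  have hinv : HasDerivAt (fun s : ℝ ↦ (1 + s / (n + 1))⁻¹)
      (-(1 / (n + 1)) / (1 + ‖x‖ ^ 2 / (n + 1)) ^ 2) (‖x‖ ^ 2) :=
    (((hasDerivAt_id _).div_const _).const_add 1).fun_inv (by positivity)
  have hcomp := hasGradientAt_comp (f := fun y ↦ ‖y‖ ^ 2) hinv (hasGradientAt_norm_sq x)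
  refine hcomp.gradient.trans ?_
  rw [smul_smul, cutoff]
  congr 1
  field_simp

theorem norm_gradient_cutoff_le : ‖∇ (cutoff n) x‖ ≤ 2 * cutoff n x / bracket x := by
  have hc := cutoff_pos n x
  have hb := bracket_pos x
  rw [gradient_cutoff, norm_smul, norm_neg, Real.norm_of_nonneg (by positivity),
    le_div_iff₀ hb]
  calc 2 / (n + 1) * cutoff n x ^ 2 * ‖x‖ * bracket x
      ≤ 2 / (n + 1) * cutoff n x ^ 2 * bracket x * bracket x := by gcongr; exact norm_le_bracket x
    _ = 2 * cutoff n x / (n + 1) * (bracket x ^ 2 * cutoff n x) := by ring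
    _ ≤ 2 * cutoff n x / (n + 1) * (n + 1) := by gcongr; exact bracket_sq_mul_cutoff_le n x
    _ = 2 * cutoff n x := by field_simp

variable {x} in
theorem norm_gradient_mul_cutoff_le {f : F → ℝ} (hf : DifferentiableAt ℝ f x) {C : ℝ} {m : ℕ}
    (hfC : |f x| ≤ C * bracket x ^ (m + 1)) (hf'C : ‖∇ f x‖ ≤ C * bracket x ^ m) :
    ‖∇ (fun y ↦ f y * cutoff n y) x‖ ≤ 3 * C * bracket x ^ m * cutoff n x := by
  have hc := cutoff_pos n x
  have hb := bracket_pos x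
  rw [gradient_mul hf (differentiableAt_cutoff n x)]
  calc ‖f x • ∇ (cutoff n) x + cutoff n x • ∇ f x‖
      ≤ |f x| * ‖∇ (cutoff n) x‖ + cutoff n x * ‖∇ f x‖ := by
        refine (norm_add_le _ _).trans_eq ?_
        rw [norm_smul, norm_smul, Real.norm_eq_abs, Real.norm_of_nonneg hc.le]
    _ ≤ C * bracket x ^ (m + 1) * (2 * cutoff n x / bracket x)
          + cutoff n x * (C * bracket x ^ m) := by
        gcongr
        · exact (abs_nonneg _).trans hfC
        · exact norm_gradient_cutoff_le n x
    _ = 3 * C * bracket x ^ m * cutoff n x := by field_simp; ring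

variable {x} in
theorem bracket_pow_mul_norm_gradient_mul_cutoff_le {f : F → ℝ} (hf : DifferentiableAt ℝ f x)
    {C : ℝ} {l m : ℕ} (hlm : l + m = 2) (hfC : |f x| ≤ C * bracket x ^ (m + 1))
    (hf'C : ‖∇ f x‖ ≤ C * bracket x ^ m) :
    bracket x ^ l * ‖∇ (fun y ↦ f y * cutoff n y) x‖ ≤ 3 * C * (n + 1) := by
  have hb := bracket_pos x
  have hC : 0 ≤ C := nonneg_of_mul_nonneg_left ((abs_nonneg _).trans hfC) (by positivity)
  calc bracket x ^ l * ‖∇ (fun y ↦ f y * cutoff n y) x‖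
      ≤ bracket x ^ l * (3 * C * bracket x ^ m * cutoff n x) := by
        gcongr
        exact norm_gradient_mul_cutoff_le n hf hfC hf'C
    _ = 3 * C * (bracket x ^ (l + m) * cutoff n x) := by ring
    _ ≤ 3 * C * (n + 1) := by rw [hlm]; gcongr; exact bracket_sq_mul_cutoff_le n x

variable {x} in
theorem tendsto_gradient_mul_cutoff {f : F → ℝ} (hf : DifferentiableAt ℝ f x) :
    Tendsto (fun n ↦ ∇ (fun y ↦ f y * cutoff n y) x) atTop (𝓝 (∇ f x)) := by
  have hcoeff : Tendsto (fun n : ℕ ↦ -(2 / ((n : ℝ) + 1) * cutoff n x ^ 2)) atTop (𝓝 0) := by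
    have hn : Tendsto (fun n : ℕ ↦ 2 / ((n : ℝ) + 1)) atTop (𝓝 0) :=
      tendsto_const_nhds.div_atTop (tendsto_natCast_atTop_atTop.atTop_add tendsto_const_nhds)
    simpa using (hn.mul ((tendsto_cutoff x).pow 2)).neg
  simp only [gradient_mul hf (differentiableAt_cutoff _ x), gradient_cutoff]
  simpa using ((hcoeff.smul_const x).const_smul (f x)).add ((tendsto_cutoff x).smul_const (∇ f x))

theorem bracket_mul_norm_gradient_truncBracket_le :
    bracket x * ‖∇ (truncBracket n) x‖ ≤ truncBracket n x := by
  have hc := cutoff_pos n x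
  have hb := bracket_pos x
  set s := bracket x ^ 2 * cutoff n x / (n + 1) with hs
  have hs0 : 0 ≤ s := by positivity
  have hs1 : s ≤ 1 := div_le_one_of_le₀ (bracket_sq_mul_cutoff_le n x) (by positivity)
  have hgrad : ∇ (truncBracket n) x = (cutoff n x / bracket x * (1 - 2 * s)) • x := by
    refine (gradient_mul (hasGradientAt_bracket x).differentiableAt
      (differentiableAt_cutoff n x)).trans ?_
    rw [gradient_cutoff, (hasGradientAt_bracket x).gradient, smul_smul, smul_smul, ← add_smul, hs]
    congr 1
    field_simp
    ring
  calc bracket x * ‖∇ (truncBracket n) x‖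
      = bracket x * (cutoff n x / bracket x * |1 - 2 * s| * ‖x‖) := by
        rw [hgrad, norm_smul, norm_mul, Real.norm_of_nonneg (by positivity), Real.norm_eq_abs]
    _ ≤ bracket x * (cutoff n x / bracket x * 1 * bracket x) := by
        gcongr
        · exact abs_le.2 ⟨by linarith, by linarith⟩
        · exact norm_le_bracket x
    _ = truncBracket n x := by rw [truncBracket]; field_simp

theorem sq_mul_norm_gradient_truncBracket_sq_le (s : ℝ) :
    s ^ 2 * ‖∇ (truncBracket n) x‖ ^ 2 ≤ ((bracket x)⁻¹ * (truncBracket n x * s)) ^ 2 := by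
  have hgrad : ‖∇ (truncBracket n) x‖ ≤ (bracket x)⁻¹ * truncBracket n x :=
    (le_inv_mul_iff₀ (bracket_pos x)).2 (bracket_mul_norm_gradient_truncBracket_le n x)
  calc s ^ 2 * ‖∇ (truncBracket n) x‖ ^ 2
      ≤ s ^ 2 * ((bracket x)⁻¹ * truncBracket n x) ^ 2 := by gcongr
    _ = ((bracket x)⁻¹ * (truncBracket n x * s)) ^ 2 := by ring

theorem inner_gradient_cutoff_zero :
    inner ℝ (∇ (cutoff 0) x) x = 2 * cutoff 0 x ^ 2 - 2 * cutoff 0 x := by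
  have hc : cutoff 0 x * (1 + ‖x‖ ^ 2) = 1 := by
    rw [cutoff_zero, ← bracket_sq]
    exact inv_mul_cancel₀ (pow_pos (bracket_pos x) 2).ne'
  rw [gradient_cutoff, real_inner_smul_left, real_inner_self_eq_norm_sq, Nat.cast_zero]
  linear_combination (-2 * cutoff 0 x) * hc

/-- With `d = m + 2`, the right-hand side is `div (φ² ⟨x⟩⁻² x)` for `φ x = s` and `∇ φ x = G`. -/
theorem hardy_pointwise {m : ℝ} (hm : 0 < m) (s : ℝ) (G : F) :
    m / 2 * ((bracket x)⁻¹ * s) ^ 2 - 2 / m * ‖G‖ ^ 2 ≤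
      s ^ 2 * ((m + 2) * cutoff 0 x + inner ℝ (∇ (cutoff 0) x) x) +
        2 * (s * inner ℝ G x * cutoff 0 x) := by
  have hb := bracket_pos x
  set a := (bracket x)⁻¹ * |s| with ha
  have hcross : |s * inner ℝ G x * cutoff 0 x| ≤ a * ‖G‖ := by
    rw [abs_mul, abs_mul, abs_of_pos (cutoff_pos 0 x), cutoff_zero]
    calc |s| * |inner ℝ G x| * (bracket x ^ 2)⁻¹
        ≤ |s| * (‖G‖ * bracket x) * (bracket x ^ 2)⁻¹ := by
          gcongr
          exact (abs_real_inner_le_norm _ _).trans (by gcongr; exact norm_le_bracket x)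
      _ = a * ‖G‖ := by rw [ha]; field_simp
  have hsq : ((bracket x)⁻¹ * s) ^ 2 = a ^ 2 := by rw [mul_pow, mul_pow, sq_abs]
  have hasq : a ^ 2 = s ^ 2 * cutoff 0 x := by
    rw [← hsq, cutoff_zero, mul_pow, inv_pow, mul_comm]
  have hamgm : m / 2 * a ^ 2 - 2 / m * ‖G‖ ^ 2 ≤ m * a ^ 2 - 2 * (a * ‖G‖) := by
    have hsquare : 0 ≤ m / 2 * (a - 2 / m * ‖G‖) ^ 2 := by positivity
    have hexpand : m / 2 * (a - 2 / m * ‖G‖) ^ 2 =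
        m / 2 * a ^ 2 - 2 * (a * ‖G‖) + 2 / m * ‖G‖ ^ 2 := by field_simp; ring
    linarith
  rw [hsq, inner_gradient_cutoff_zero]
  nlinarith [abs_le.1 hcross, mul_nonneg (sq_nonneg s) (sq_nonneg (cutoff 0 x))]

end Bracket

/-! ### Test functions and Hardy's inequality -/

section TestFunction

variable {E : Type*} [NormedAddCommGroup E] [InnerProductSpace ℝ E]

/-- Test functions, i.e. smooth functions with compact support. -/
structure IsTestFunction (φ : E → ℝ) : Prop where
  contDiff : ContDiff ℝ ∞ φ
  hasCompactSupport : HasCompactSupport φ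

namespace IsTestFunction

variable {φ ψ : E → ℝ}

theorem continuous (hφ : IsTestFunction φ) : Continuous φ := hφ.contDiff.continuous

theorem differentiable (hφ : IsTestFunction φ) : Differentiable ℝ φ :=
  hφ.contDiff.differentiable (by simp)

theorem sub (hφ : IsTestFunction φ) (hψ : IsTestFunction ψ) :
    IsTestFunction fun x ↦ φ x - ψ x :=
  ⟨hφ.contDiff.sub hψ.contDiff, hφ.hasCompactSupport.sub hψ.hasCompactSupport⟩

theorem mul_left (hφ : IsTestFunction φ) {η : E → ℝ} (hη : ContDiff ℝ ∞ η) :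
    IsTestFunction fun x ↦ η x * φ x :=
  ⟨hη.mul hφ.contDiff, hφ.hasCompactSupport.mul_left⟩

section Gradient

variable [CompleteSpace E]

theorem continuous_gradient (hφ : IsTestFunction φ) : Continuous (∇ φ) :=
  HardySobolev.continuous_gradient (hφ.contDiff.of_le (by simp))

theorem hasCompactSupport_gradient (hφ : IsTestFunction φ) : HasCompactSupport (∇ φ) :=
  (hφ.hasCompactSupport.fderiv ℝ).comp_left (map_zero _)

end Gradient

variable [MeasurableSpace E] [BorelSpace E] {μ : Measure E} [IsFiniteMeasureOnCompacts μ]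

theorem memLp_mul_left (hφ : IsTestFunction φ) {g : E → ℝ} (hg : Continuous g) (p : ℝ≥0∞) :
    MemLp (fun x ↦ g x * φ x) p μ :=
  (hg.mul hφ.continuous).memLp_of_hasCompactSupport hφ.hasCompactSupport.mul_left

theorem integrable_mul_left (hφ : IsTestFunction φ) {g : E → ℝ} (hg : Continuous g) :
    Integrable (fun x ↦ g x * φ x) μ :=
  memLp_one_iff_integrable.1 (hφ.memLp_mul_left hg 1)

theorem memLp_inv_bracket_mul (hφ : IsTestFunction φ) (p : ℝ≥0∞) :
    MemLp (fun x ↦ (bracket x)⁻¹ * φ x) p μ :=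
  hφ.memLp_mul_left (continuous_bracket.inv₀ fun x ↦ (bracket_pos x).ne') p

variable [FiniteDimensional ℝ E] in
theorem memLp_gradient (hφ : IsTestFunction φ) (p : ℝ≥0∞) : MemLp (∇ φ) p μ :=
  hφ.continuous_gradient.memLp_of_hasCompactSupport hφ.hasCompactSupport_gradient

end IsTestFunction

section Hardy

open Module

variable [FiniteDimensional ℝ E] [MeasurableSpace E] [BorelSpace E] {μ : Measure E}
  [μ.IsAddHaarMeasure] {φ f : E → ℝ}

theorem IsTestFunction.integral_sq_mul_inner_gradient (hφ : IsTestFunction φ)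
    (hf : ContDiff ℝ 1 f) (v : E) :
    ∫ x, φ x ^ 2 * inner ℝ (∇ f x) v ∂μ = -2 * ∫ x, φ x * inner ℝ (∇ φ x) v * f x ∂μ := by
  have hφc := hφ.continuous
  have hφ'c := hφ.continuous_gradient
  have hf'c := HardySobolev.continuous_gradient hf
  have hgrad (x : E) : inner ℝ (∇ (fun y ↦ φ y ^ 2) x) v = 2 * (φ x * inner ℝ (∇ φ x) v) := by
    rw [gradient_sq (hφ.differentiable x), real_inner_smul_left, mul_assoc]
  have hibp := integral_mul_fderiv_eq_neg_fderiv_mul_of_integrable (μ := μ) (v := v)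
    (f := fun x ↦ φ x ^ 2) (g := f) ?_ ?_ ?_ (fun x _ ↦ (hφ.differentiable x).pow 2)
    (fun x _ ↦ hf.differentiable one_ne_zero x)
  · simp only [← inner_gradient_left, hgrad] at hibp
    rw [hibp, neg_mul, ← integral_const_mul]
    simp only [mul_assoc]
  · simp only [← inner_gradient_left, hgrad]
    exact (hφ.integrable_mul_left (g := fun x ↦ 2 * inner ℝ (∇ φ x) v * f x)
      (by fun_prop)).congr (ae_of_all _ fun x ↦ by ring)
  · simp only [← inner_gradient_left]
    exact (hφ.integrable_mul_left (g := fun x ↦ φ x * inner ℝ (∇ f x) v)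
      (by fun_prop)).congr (ae_of_all _ fun x ↦ by ring)
  · exact (hφ.integrable_mul_left (g := fun x ↦ φ x * f x)
      (by fun_prop)).congr (ae_of_all _ fun x ↦ by ring)

theorem IsTestFunction.integral_sq_mul_radial (hφ : IsTestFunction φ) (hf : ContDiff ℝ 1 f) :
    ∫ x, φ x ^ 2 * (finrank ℝ E * f x + inner ℝ (∇ f x) x) ∂μ =
      -2 * ∫ x, φ x * inner ℝ (∇ φ x) x * f x ∂μ := by
  have hφc := hφ.continuous
  have hφ'c := hφ.continuous_gradient
  let b := stdOrthonormalBasis ℝ E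
  let fi (i) (x : E) : ℝ := inner ℝ (b i) x * f x
  have hfi (i) : ContDiff ℝ 1 (fi i) := (contDiff_const.inner ℝ contDiff_id).mul hf
  have hgrad (i) (x : E) : inner ℝ (∇ (fi i) x) (b i) =
      inner ℝ (∇ f x) (b i) * inner ℝ (b i) x + f x := by
    have hinner := hasGradientAt_inner_left (b i) x
    rw [gradient_mul hinner.differentiableAt (hf.differentiable one_ne_zero x), hinner.gradient,
      inner_add_left, real_inner_smul_left, real_inner_smul_left, real_inner_self_eq_norm_sq,
      b.orthonormal.1 i, one_pow, mul_one, mul_comm]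
  have hdiv (x : E) : φ x ^ 2 * (finrank ℝ E * f x + inner ℝ (∇ f x) x) =
      ∑ i, φ x ^ 2 * inner ℝ (∇ (fi i) x) (b i) := by
    simp only [hgrad, ← Finset.mul_sum, Finset.sum_add_distrib, b.sum_inner_mul_inner,
      Finset.sum_const, Finset.card_univ, Fintype.card_fin, nsmul_eq_mul]
    ring
  have hflux (x : E) : φ x * inner ℝ (∇ φ x) x * f x =
      ∑ i, φ x * inner ℝ (∇ φ x) (b i) * fi i x := by
    rw [← b.sum_inner_mul_inner, Finset.mul_sum, Finset.sum_mul]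
    exact Finset.sum_congr rfl fun i _ ↦ by ring
  have hleft (i) : Integrable (fun x ↦ φ x ^ 2 * inner ℝ (∇ (fi i) x) (b i)) μ := by
    have hfi'c := HardySobolev.continuous_gradient (hfi i)
    exact (hφ.integrable_mul_left (g := fun x ↦ φ x * inner ℝ (∇ (fi i) x) (b i))
      (by fun_prop)).congr (ae_of_all _ fun x ↦ by ring)
  have hright (i) : Integrable (fun x ↦ φ x * inner ℝ (∇ φ x) (b i) * fi i x) μ := by
    have hfic := (hfi i).continuous
    exact (hφ.integrable_mul_left (g := fun x ↦ inner ℝ (∇ φ x) (b i) * fi i x)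
      (by fun_prop)).congr (ae_of_all _ fun x ↦ by ring)
  simp only [hdiv, hflux]
  rw [integral_finsetSum _ fun i _ ↦ hleft i, integral_finsetSum _ fun i _ ↦ hright i,
    Finset.mul_sum]
  exact Finset.sum_congr rfl fun i _ ↦ hφ.integral_sq_mul_inner_gradient (hfi i) (b i)

/-- Integrate `div (φ² ⟨x⟩⁻² x) = 0`, using `div (⟨x⟩⁻² x) ≥ (d - 2) ⟨x⟩⁻²`. -/
theorem IsTestFunction.hardy_inequality (hφ : IsTestFunction φ) (hd : 2 < finrank ℝ E) :
    ∫ x, ((bracket x)⁻¹ * φ x) ^ 2 ∂μ ≤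
      (2 / (finrank ℝ E - 2 : ℝ)) ^ 2 * ∫ x, ‖∇ φ x‖ ^ 2 ∂μ := by
  set m : ℝ := finrank ℝ E - 2 with hm
  have hm0 : 0 < m := sub_pos.2 (by exact_mod_cast hd)
  have hφc := hφ.continuous
  have hφ'c := hφ.continuous_gradient
  have hcc : Continuous (cutoff 0 : E → ℝ) := (contDiff_cutoff 0).continuous
  have hc : ContDiff ℝ 1 (cutoff 0 : E → ℝ) := (contDiff_cutoff 0).of_le (by simp)
  have hc'c := HardySobolev.continuous_gradient hc
  have hdiv : Integrable (fun x ↦ φ x ^ 2 * (finrank ℝ E * cutoff 0 x +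
      inner ℝ (∇ (cutoff 0) x) x)) μ :=
    (hφ.integrable_mul_left (g := fun x ↦ φ x * (finrank ℝ E * cutoff 0 x +
      inner ℝ (∇ (cutoff 0) x) x)) (by fun_prop)).congr (ae_of_all _ fun x ↦ by ring)
  have hflux : Integrable (fun x ↦ φ x * inner ℝ (∇ φ x) x * cutoff 0 x) μ :=
    (hφ.integrable_mul_left (g := fun x ↦ inner ℝ (∇ φ x) x * cutoff 0 x)
      (by fun_prop)).congr (ae_of_all _ fun x ↦ by ring)
  have hφ2 := ((hφ.memLp_inv_bracket_mul 2).integrable_sq (μ := μ)).const_mul (m / 2)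
  have hφ'2 := ((hφ.memLp_gradient 2).integrable_norm_pow (μ := μ) two_ne_zero).const_mul (2 / m)
  have hrank : m + 2 = finrank ℝ E := by rw [hm]; ring
  have hint := integral_mono (hφ2.sub hφ'2) (hdiv.add (hflux.const_mul 2)) fun x ↦
    hrank ▸ hardy_pointwise x hm0 (φ x) (∇ φ x)
  simp only [Pi.sub_apply, Pi.add_apply] at hint
  rw [integral_sub hφ2 hφ'2, integral_add hdiv (hflux.const_mul 2), integral_const_mul,
    integral_const_mul, integral_const_mul, hφ.integral_sq_mul_radial hc] at hint
  have hscale : m / 2 * ∫ x, ((bracket x)⁻¹ * φ x) ^ 2 ∂μ ≤ 2 / m * ∫ x, ‖∇ φ x‖ ^ 2 ∂μ := by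
    linarith
  calc ∫ x, ((bracket x)⁻¹ * φ x) ^ 2 ∂μ
      = 2 / m * (m / 2 * ∫ x, ((bracket x)⁻¹ * φ x) ^ 2 ∂μ) := by field_simp
    _ ≤ 2 / m * (2 / m * ∫ x, ‖∇ φ x‖ ^ 2 ∂μ) := by gcongr
    _ = (2 / m) ^ 2 * ∫ x, ‖∇ φ x‖ ^ 2 ∂μ := by ring

end Hardy

end TestFunction

/-! ### The homogeneous Sobolev space -/

section D12

open Module

variable {E : Type*} [NormedAddCommGroup E] [InnerProductSpace ℝ E] [FiniteDimensional ℝ E]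
  [MeasurableSpace E] {μ : Measure E}

/-- `HasD12Gradient μ u H` says that `u` lies in the homogeneous Sobolev space `D^{1,2}` and that
`H` is its weak gradient. By Hardy's inequality, convergence of the gradients in `L²` entails
convergence of the functions in `L²` with weight `⟨x⟩⁻²`, which here identifies the limit `u`. -/
structure HasD12Gradient (μ : Measure E) (u : E → ℝ) (H : E → E) : Prop where
  memLp : MemLp (fun x ↦ (bracket x)⁻¹ * u x) 2 μ
  memLp_gradient : MemLp H 2 μ
  exists_tendsto : ∃ φ : ℕ → E → ℝ, (∀ n, IsTestFunction (φ n)) ∧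
    Tendsto (fun n ↦ eLpNorm ((fun x ↦ (bracket x)⁻¹ * φ n x) - fun x ↦ (bracket x)⁻¹ * u x) 2 μ)
      atTop (𝓝 0) ∧
    Tendsto (fun n ↦ eLpNorm (∇ (φ n) - H) 2 μ) atTop (𝓝 0)

variable [BorelSpace E]

theorem HasD12Gradient.aestronglyMeasurable {u : E → ℝ} {H : E → E} (hu : HasD12Gradient μ u H) :
    AEStronglyMeasurable u μ := by
  refine (continuous_bracket.aestronglyMeasurable.mul hu.memLp.1).congr (ae_of_all _ fun x ↦ ?_)
  exact mul_inv_cancel_left₀ (bracket_pos x).ne' (u x)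

theorem HasD12Gradient.exists_tendsto_ae [IsFiniteMeasureOnCompacts μ] {u : E → ℝ} {H : E → E}
    (hu : HasD12Gradient μ u H) :
    ∃ φ : ℕ → E → ℝ, (∀ n, IsTestFunction (φ n)) ∧
      (∀ᵐ x ∂μ, Tendsto (fun n ↦ φ n x) atTop (𝓝 (u x))) ∧
      Tendsto (fun n ↦ eLpNorm (∇ (φ n) - H) 2 μ) atTop (𝓝 0) := by
  obtain ⟨φ, hφ, hφu, hφH⟩ := hu.exists_tendsto
  obtain ⟨s, hs, hae⟩ := (tendstoInMeasure_of_tendsto_eLpNorm two_ne_zero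
    (fun n ↦ ((hφ n).memLp_inv_bracket_mul 2).1) hu.memLp.1 hφu).exists_seq_tendsto_ae
  refine ⟨fun n ↦ φ (s n), fun n ↦ hφ (s n), ?_, hφH.comp hs.tendsto_atTop⟩
  filter_upwards [hae] with x hx
  simpa only [mul_inv_cancel_left₀ (bracket_pos x).ne'] using hx.const_mul (bracket x)

variable [μ.IsAddHaarMeasure]

theorem IsTestFunction.eLpNorm_inv_bracket_mul_le {φ : E → ℝ} (hφ : IsTestFunction φ)
    (hd : 2 < finrank ℝ E) :
    eLpNorm (fun x ↦ (bracket x)⁻¹ * φ x) 2 μ ≤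
      ENNReal.ofReal (2 / (finrank ℝ E - 2 : ℝ)) * eLpNorm (∇ φ) 2 μ := by
  have hm : (0 : ℝ) < finrank ℝ E - 2 := sub_pos.2 (by exact_mod_cast hd)
  have hint : 0 ≤ ∫ x, ‖∇ φ x‖ ^ 2 ∂μ := integral_nonneg fun x ↦ by positivity
  rw [(hφ.memLp_inv_bracket_mul 2).eLpNorm_eq_integral_rpow_norm two_ne_zero ENNReal.ofNat_ne_top,
    (hφ.memLp_gradient 2).eLpNorm_eq_integral_rpow_norm two_ne_zero ENNReal.ofNat_ne_top,
    ← ENNReal.ofReal_mul (by positivity)]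
  simp only [ENNReal.toReal_ofNat, Real.rpow_ofNat, Real.norm_eq_abs, sq_abs, ← one_div,
    ← Real.sqrt_eq_rpow]
  refine ENNReal.ofReal_le_ofReal (Real.sqrt_le_iff.2 ⟨by positivity, ?_⟩)
  rw [mul_pow, Real.sq_sqrt hint]
  simpa only [one_div] using hφ.hardy_inequality hd

theorem HasD12Gradient.of_tendsto_ae (hd : 2 < finrank ℝ E) {u : E → ℝ} {H : E → E}
    {φ : ℕ → E → ℝ} (hφ : ∀ n, IsTestFunction (φ n)) (hH : AEStronglyMeasurable H μ)
    (hφu : ∀ᵐ x ∂μ, Tendsto (fun n ↦ φ n x) atTop (𝓝 (u x)))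
    (hφH : Tendsto (fun n ↦ eLpNorm (∇ (φ n) - H) 2 μ) atTop (𝓝 0)) :
    HasD12Gradient μ u H := by
  set K := ENNReal.ofReal (2 / (finrank ℝ E - 2 : ℝ))
  have hum : AEStronglyMeasurable (fun x ↦ (bracket x)⁻¹ * u x) μ :=
    aestronglyMeasurable_of_tendsto_ae atTop
      (fun n ↦ ((hφ n).memLp_inv_bracket_mul (μ := μ) 2).1)
      (hφu.mono fun x hx ↦ hx.const_mul _)
  have hcauchy (n j : ℕ) : eLpNorm (fun x ↦ (bracket x)⁻¹ * (φ n x - φ j x)) 2 μ ≤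
      K * (eLpNorm (∇ (φ n) - H) 2 μ + eLpNorm (∇ (φ j) - H) 2 μ) := by
    refine (((hφ n).sub (hφ j)).eLpNorm_inv_bracket_mul_le hd).trans ?_
    gcongr
    have hsub : ∇ (fun x ↦ φ n x - φ j x) = (∇ (φ n) - H) - (∇ (φ j) - H) := by
      ext1 x
      simp [gradient_sub ((hφ n).differentiable x) ((hφ j).differentiable x)]
    rw [hsub]
    exact eLpNorm_sub_le (((hφ n).memLp_gradient 2).1.sub hH)
      (((hφ j).memLp_gradient 2).1.sub hH) one_le_two
  have hbound (n : ℕ) :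
      eLpNorm ((fun x ↦ (bracket x)⁻¹ * φ n x) - fun x ↦ (bracket x)⁻¹ * u x) 2 μ ≤
        K * eLpNorm (∇ (φ n) - H) 2 μ := by
    refine (Lp.eLpNorm_lim_le_liminf_eLpNorm
      (f := fun j x ↦ (bracket x)⁻¹ * (φ n x - φ j x))
      (fun j ↦ (((hφ n).sub (hφ j)).memLp_inv_bracket_mul 2).1) _ ?_).trans
      ((liminf_le_liminf (Eventually.of_forall (hcauchy n))).trans_eq ?_)
    · filter_upwards [hφu] with x hx
      simpa only [Pi.sub_apply, ← mul_sub] using (hx.const_sub (φ n x)).const_mul (bracket x)⁻¹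
    · refine (ENNReal.Tendsto.const_mul ?_ (Or.inr ENNReal.ofReal_ne_top)).liminf_eq
      simpa using tendsto_const_nhds.add hφH
  have hlim : Tendsto (fun n ↦ eLpNorm
      ((fun x ↦ (bracket x)⁻¹ * φ n x) - fun x ↦ (bracket x)⁻¹ * u x) 2 μ) atTop (𝓝 0) :=
    tendsto_of_tendsto_of_tendsto_of_le_of_le tendsto_const_nhds
      (by simpa using ENNReal.Tendsto.const_mul hφH (Or.inr ENNReal.ofReal_ne_top))
      (fun _ ↦ zero_le) hbound
  exact ⟨memLp_of_tendsto_eLpNorm_sub (fun n ↦ (hφ n).memLp_inv_bracket_mul 2) hum hlim,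
    memLp_of_tendsto_eLpNorm_sub (fun n ↦ (hφ n).memLp_gradient 2) hH hφH, φ, hφ, hlim, hφH⟩

namespace HasD12Gradient

variable {u η f : E → ℝ} {H : E → E} {C : ℝ}

theorem hardy_inequality (hu : HasD12Gradient μ u H) (hd : 2 < finrank ℝ E) :
    ∫ x, ((bracket x)⁻¹ * u x) ^ 2 ∂μ ≤
      (2 / (finrank ℝ E - 2 : ℝ)) ^ 2 * ∫ x, ‖H x‖ ^ 2 ∂μ := by
  obtain ⟨φ, hφ, hφu, hφH⟩ := hu.exists_tendsto
  have hleft := tendsto_integral_norm_sq (fun n ↦ (hφ n).memLp_inv_bracket_mul 2) hu.memLp hφu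
  simp only [Real.norm_eq_abs, sq_abs] at hleft
  exact le_of_tendsto_of_tendsto' hleft ((tendsto_integral_norm_sq
    (fun n ↦ (hφ n).memLp_gradient 2) hu.memLp_gradient hφH).const_mul _)
    fun n ↦ (hφ n).hardy_inequality hd

theorem integral_norm_sq_pos (hu : HasD12Gradient μ u H) (hd : 2 < finrank ℝ E)
    (h0 : ¬ u =ᵐ[μ] 0) : 0 < ∫ x, ‖H x‖ ^ 2 ∂μ := by
  refine (integral_nonneg fun x ↦ by positivity).lt_of_ne fun hzero ↦ h0 ?_
  have hle := hu.hardy_inequality hd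
  rw [← hzero, mul_zero] at hle
  have hae := (integral_eq_zero_iff_of_nonneg (fun x ↦ sq_nonneg ((bracket x)⁻¹ * u x))
    hu.memLp.integrable_sq).1 (hle.antisymm (integral_nonneg fun x ↦ sq_nonneg _))
  filter_upwards [hae] with x hx
  simpa [(bracket_pos x).ne'] using hx

theorem mul_left (hu : HasD12Gradient μ u H) (hη : ContDiff ℝ ∞ η) (hC : ∀ x, |η x| ≤ C)
    (hC' : ∀ x, bracket x * ‖∇ η x‖ ≤ C) :
    HasD12Gradient μ (fun x ↦ η x * u x) (fun x ↦ η x • H x + u x • ∇ η x) := by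
  obtain ⟨φ, hφ, hφu, hφH⟩ := hu.exists_tendsto
  have hη'c : Continuous (∇ η) := continuous_gradient (hη.of_le (by simp))
  have hweight (a : E → ℝ) (x : E) :
      a x • ∇ η x = ((bracket x)⁻¹ * a x) • bracket x • ∇ η x := by
    rw [smul_smul, mul_right_comm, inv_mul_cancel₀ (bracket_pos x).ne', one_mul]
  have hcomm (a : E → ℝ) (x : E) :
      (bracket x)⁻¹ * (η x * a x) = ((bracket x)⁻¹ * a x) • η x := by
    rw [smul_eq_mul]; ring
  have hm : AEStronglyMeasurable (fun x ↦ bracket x • ∇ η x) μ :=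
    (continuous_bracket.smul hη'c).aestronglyMeasurable
  have hmC (x : E) : ‖bracket x • ∇ η x‖ ≤ C := by
    rw [norm_smul, Real.norm_of_nonneg (bracket_pos x).le]
    exact hC' x
  have hηH (G : E → E) (x : E) : ‖η x • G x‖ ≤ C * ‖G x‖ := by
    rw [norm_smul]
    exact mul_le_mul_of_nonneg_right (hC x) (norm_nonneg _)
  have hηm : AEStronglyMeasurable η μ := hη.continuous.aestronglyMeasurable
  refine ⟨?_, ?_, fun n x ↦ η x * φ n x, fun n ↦ (hφ n).mul_left hη, ?_, ?_⟩
  · simpa only [hcomm] using memLp_smul_of_norm_le hu.memLp hηm hC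
  · exact (hu.memLp_gradient.of_le_mul (hηm.smul hu.memLp_gradient.1) (ae_of_all _ (hηH H))).add
      ((memLp_smul_of_norm_le hu.memLp hm hmC).ae_eq (ae_of_all _ fun x ↦ (hweight u x).symm))
  · simpa only [hcomm] using tendsto_eLpNorm_smul_sub hφu hC
  · have hsplit (n : ℕ) : ∇ (fun x ↦ η x * φ n x) - (fun x ↦ η x • H x + u x • ∇ η x) =
        (fun x ↦ η x • (∇ (φ n) - H) x) + ((fun x ↦ ((bracket x)⁻¹ * φ n x) • bracket x • ∇ η x) -
          fun x ↦ ((bracket x)⁻¹ * u x) • bracket x • ∇ η x) := by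
      ext1 x
      simp only [← hweight, Pi.add_apply, Pi.sub_apply, smul_sub,
        gradient_mul (hη.differentiable (by simp) x) ((hφ n).differentiable x)]
      abel
    have hdiff (n : ℕ) := ((hφ n).memLp_gradient (μ := μ) 2).1.sub hu.memLp_gradient.1
    simp only [hsplit]
    exact tendsto_eLpNorm_add one_le_two (fun n ↦ hηm.smul (hdiff n))
      (fun n ↦ (((hφ n).memLp_inv_bracket_mul 2).1.smul hm).sub (hu.memLp.1.smul hm))
      (tendsto_eLpNorm_of_norm_le hφH fun n x ↦ hηH _ x) (tendsto_eLpNorm_smul_sub hφu hmC)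

theorem integral_sq_mul_inner_gradient (hu : HasD12Gradient μ u H) (hf : ContDiff ℝ 1 f)
    (hC : ∀ x, bracket x * |f x| ≤ C) (hC' : ∀ x, bracket x ^ 2 * ‖∇ f x‖ ≤ C) (v : E) :
    ∫ x, u x ^ 2 * inner ℝ (∇ f x) v ∂μ = -2 * ∫ x, u x * inner ℝ (H x) v * f x ∂μ := by
  obtain ⟨φ, hφ, hφu, hφH⟩ := hu.exists_tendsto
  have hcf := continuous_gradient hf
  have hbc : Continuous (bracket : E → ℝ) := continuous_bracket
  have hdm : AEStronglyMeasurable (fun x ↦ bracket x ^ 2 * inner ℝ (∇ f x) v) μ :=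
    (by fun_prop : Continuous _).aestronglyMeasurable
  have hfm : AEStronglyMeasurable (fun x ↦ (bracket x * f x) • v) μ :=
    (by fun_prop : Continuous _).aestronglyMeasurable
  have hdC (x : E) : ‖bracket x ^ 2 * inner ℝ (∇ f x) v‖ ≤ C * ‖v‖ := by
    rw [norm_mul, norm_pow, Real.norm_of_nonneg (bracket_pos x).le]
    calc bracket x ^ 2 * ‖inner ℝ (∇ f x) v‖ ≤ bracket x ^ 2 * (‖∇ f x‖ * ‖v‖) := by
          gcongr; exact norm_inner_le_norm _ _
      _ ≤ C * ‖v‖ := by rw [← mul_assoc]; gcongr; exact hC' x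
  have hfC (x : E) : ‖(bracket x * f x) • v‖ ≤ C * ‖v‖ := by
    rw [norm_smul, norm_mul, Real.norm_of_nonneg (bracket_pos x).le]
    gcongr
    exact hC x
  have hleft (a : E → ℝ) (x : E) : inner ℝ ((bracket x)⁻¹ * a x)
      (((bracket x)⁻¹ * a x) • (bracket x ^ 2 * inner ℝ (∇ f x) v)) =
        a x ^ 2 * inner ℝ (∇ f x) v := by
    have := (bracket_pos x).ne'
    simp only [smul_eq_mul, RCLike.inner_apply, conj_trivial]
    field_simp
  have hright (a : E → ℝ) (G : E → E) (x : E) : inner ℝ (G x)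
      (((bracket x)⁻¹ * a x) • (bracket x * f x) • v) = a x * inner ℝ (G x) v * f x := by
    have := (bracket_pos x).ne'
    rw [smul_smul, real_inner_smul_right]
    field_simp
  have hlim := tendsto_integral_inner (fun n ↦ (hφ n).memLp_inv_bracket_mul 2)
    (fun n ↦ memLp_smul_of_norm_le ((hφ n).memLp_inv_bracket_mul 2) hdm hdC) hu.memLp
    (memLp_smul_of_norm_le hu.memLp hdm hdC) hφu (tendsto_eLpNorm_smul_sub hφu hdC)
  have hlim' := tendsto_integral_inner (fun n ↦ (hφ n).memLp_gradient 2)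
    (fun n ↦ memLp_smul_of_norm_le ((hφ n).memLp_inv_bracket_mul 2) hfm hfC) hu.memLp_gradient
    (memLp_smul_of_norm_le hu.memLp hfm hfC) hφH (tendsto_eLpNorm_smul_sub hφu hfC)
  simp only [hleft, hright] at hlim hlim'
  refine tendsto_nhds_unique hlim ((hlim'.const_mul (-2)).congr fun n ↦ ?_)
  exact ((hφ n).integral_sq_mul_inner_gradient hf v).symm

end HasD12Gradient

end D12

/-! ### Extremals of weighted Sobolev inequalities -/

/-- The density `ρ |u|^q` of the weighted `L^q` norm of `u`. -/
def powDensity {α : Type*} (ρ : α → ℝ) (q : ℝ) (u : α → ℝ) (x : α) : ℝ := ρ x * |u x| ^ q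

theorem powDensity_mul {α : Type*} {ρ u η : α → ℝ} {q : ℝ} (x : α) :
    powDensity ρ q (fun y ↦ η y * u y) x = |η x| ^ q * powDensity ρ q u x := by
  simp only [powDensity, abs_mul, Real.mul_rpow (abs_nonneg _) (abs_nonneg _)]
  ring

section Extremal

open Module

variable {E : Type*} [NormedAddCommGroup E] [InnerProductSpace ℝ E] [FiniteDimensional ℝ E]
  [MeasurableSpace E] {μ : Measure E} {ρ u η : E → ℝ} {q S : ℝ}

/-- A weighted Sobolev inequality `S (∫ ρ |φ|^q)^{2/q} ≤ ∫ ‖∇ φ‖²` on test functions, with positive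
constant `S`, exponent `q > 2` and locally integrable weight `ρ ≥ 0`. -/
structure SobolevInequality (μ : Measure E) (ρ : E → ℝ) (q S : ℝ) : Prop where
  pos : 0 < S
  two_lt : 2 < q
  weight_nonneg : ∀ x, 0 ≤ ρ x
  locallyIntegrable : LocallyIntegrable ρ μ
  le_integral : ∀ φ, IsTestFunction φ →
    S * (∫ x, powDensity ρ q φ x ∂μ) ^ (2 / q) ≤ ∫ x, ‖∇ φ x‖ ^ 2 ∂μ

/-- `w`, with weak gradient `G`, is a normalized function attaining equality in the weighted Sobolev
inequality; `w` may change sign. -/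
structure IsExtremal (μ : Measure E) (ρ : E → ℝ) (q S : ℝ) (w : E → ℝ) (G : E → E) : Prop
    extends SobolevInequality μ ρ q S where
  hasD12Gradient : HasD12Gradient μ w G
  integral_powDensity : ∫ x, powDensity ρ q w x ∂μ = 1
  integral_norm_sq : ∫ x, ‖G x‖ ^ 2 ∂μ = S

/-- The weak gradient of `truncBracket n * w`, where `G` is the weak gradient of `w`. -/
def truncGradient (w : E → ℝ) (G : E → E) (n : ℕ) (x : E) : E :=
  truncBracket n x • G x + w x • ∇ (truncBracket n) x

namespace SobolevInequality

theorem powDensity_nonneg (h : SobolevInequality μ ρ q S) (u : E → ℝ) (x : E) :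
    0 ≤ powDensity ρ q u x :=
  mul_nonneg (h.weight_nonneg x) (by positivity)

theorem exponent_pos (h : SobolevInequality μ ρ q S) : 0 < q := two_pos.trans h.two_lt

theorem integral_powDensity_le (h : SobolevInequality μ ρ q S) {φ : E → ℝ}
    (hφ : IsTestFunction φ) :
    ∫ x, powDensity ρ q φ x ∂μ ≤ ((∫ x, ‖∇ φ x‖ ^ 2 ∂μ) / S) ^ (q / 2) := by
  have hint : 0 ≤ ∫ x, powDensity ρ q φ x ∂μ := integral_nonneg (h.powDensity_nonneg φ)
  have hle : (∫ x, powDensity ρ q φ x ∂μ) ^ (2 / q) ≤ (∫ x, ‖∇ φ x‖ ^ 2 ∂μ) / S :=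
    (le_div_iff₀' h.pos).2 (h.le_integral φ hφ)
  have hq : 0 ≤ q / 2 := by linarith [h.two_lt]
  simpa only [← inv_div q 2, Real.rpow_inv_rpow hint (by linarith [h.two_lt] : q / 2 ≠ 0)]
    using Real.rpow_le_rpow (by positivity) hle hq

variable [BorelSpace E]

theorem integrable_powDensity_of_isTestFunction (h : SobolevInequality μ ρ q S) {φ : E → ℝ}
    (hφ : IsTestFunction φ) : Integrable (powDensity ρ q φ) μ := by
  have hq := h.exponent_pos
  have hc : Continuous fun x ↦ |φ x| ^ q := hφ.continuous.abs.rpow_const fun _ ↦ Or.inr hq.le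
  have hsupp : HasCompactSupport fun x ↦ |φ x| ^ q :=
    hφ.hasCompactSupport.comp_left (g := fun s ↦ |s| ^ q) (by simp [hq.ne'])
  exact h.locallyIntegrable.integrable_smul_right_of_hasCompactSupport hc hsupp

variable [μ.IsAddHaarMeasure]

theorem integrable_powDensity_and_le (h : SobolevInequality μ ρ q S) {H : E → E}
    (hu : HasD12Gradient μ u H) : Integrable (powDensity ρ q u) μ ∧
      S * (∫ x, powDensity ρ q u x ∂μ) ^ (2 / q) ≤ ∫ x, ‖H x‖ ^ 2 ∂μ := by
  have hq := h.exponent_pos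
  obtain ⟨φ, hφ, hφu, hφH⟩ := hu.exists_tendsto_ae
  have henergy := tendsto_integral_norm_sq (fun n ↦ (hφ n).memLp_gradient 2) hu.memLp_gradient hφH
  obtain ⟨hint, hle⟩ := integrable_and_integral_le_of_tendsto
    (fun n ↦ h.integrable_powDensity_of_isTestFunction (hφ n))
    (fun n ↦ h.powDensity_nonneg (φ n))
    (hφu.mono fun x hx ↦ (hx.abs.rpow_const (Or.inr hq.le)).const_mul (ρ x))
    (fun n ↦ h.integral_powDensity_le (hφ n))
    ((henergy.div_const S).rpow_const (p := q / 2) (Or.inr (by positivity)))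
  refine ⟨hint, (le_div_iff₀' h.pos).1 ?_⟩
  have hS : 0 ≤ (∫ x, ‖H x‖ ^ 2 ∂μ) / S :=
    div_nonneg (integral_nonneg fun x ↦ by positivity) h.pos.le
  simpa only [← inv_div q 2, Real.rpow_rpow_inv hS (by positivity : q / 2 ≠ 0)] using
    Real.rpow_le_rpow (integral_nonneg (h.powDensity_nonneg u)) hle
      (by positivity : 0 ≤ (q / 2)⁻¹)

end SobolevInequality

namespace IsExtremal

variable [BorelSpace E] [μ.IsAddHaarMeasure] {w h : E → ℝ} {G : E → E} {C : ℝ}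

theorem integrable_powDensity (hw : IsExtremal μ ρ q S w G) : Integrable (powDensity ρ q w) μ :=
  (hw.integrable_powDensity_and_le hw.hasD12Gradient).1

theorem integrable_mul_powDensity (hw : IsExtremal μ ρ q S w G) (hh : Continuous h)
    (hC : ∀ x, |h x| ≤ C) : Integrable (fun x ↦ h x * powDensity ρ q w x) μ :=
  hw.integrable_powDensity.bdd_mul hh.aestronglyMeasurable (ae_of_all _ hC)

/-- Bernoulli's inequality `(1 + s)^q ≥ 1 + q s`, integrated against `ρ |w|^q`; it replaces
differentiation under the integral sign. -/
theorem one_add_mul_integral_le (hw : IsExtremal μ ρ q S w G) {g : E → ℝ} (hg : ∀ x, -1 ≤ g x)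
    (hgW : Integrable (fun x ↦ g x * powDensity ρ q w x) μ)
    (hint : Integrable (powDensity ρ q fun x ↦ (1 + g x) * w x) μ) :
    1 + q * ∫ x, g x * powDensity ρ q w x ∂μ ≤
      ∫ x, powDensity ρ q (fun y ↦ (1 + g y) * w y) x ∂μ := by
  have hW := hw.integrable_powDensity
  calc 1 + q * ∫ x, g x * powDensity ρ q w x ∂μ
      = ∫ x, (powDensity ρ q w x + q * (g x * powDensity ρ q w x)) ∂μ := by
        rw [integral_add hW (hgW.const_mul q), integral_const_mul, hw.integral_powDensity]
    _ ≤ ∫ x, powDensity ρ q (fun y ↦ (1 + g y) * w y) x ∂μ :=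
        integral_mono (hW.add (hgW.const_mul q)) hint fun x ↦ ?_
  have hbernoulli := mul_le_mul_of_nonneg_right
    (one_add_mul_self_le_rpow_one_add (hg x) (by linarith [hw.two_lt] : 1 ≤ q))
    (hw.powDensity_nonneg w x)
  simp only [powDensity_mul, abs_of_nonneg (by linarith [hg x] : 0 ≤ 1 + g x)]
  linarith

theorem le_integral_norm_add_smul_sq (hw : IsExtremal μ ρ q S w G) (hh : ContDiff ℝ ∞ h)
    (hC : ∀ x, |h x| ≤ C) (hC' : ∀ x, bracket x * ‖∇ h x‖ ≤ C) {t : ℝ} (ht : |t| * C ≤ 1)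
    (hta : 0 ≤ 1 + q * (t * ∫ x, h x * powDensity ρ q w x ∂μ)) :
    S * (1 + q * (t * ∫ x, h x * powDensity ρ q w x ∂μ)) ^ (2 / q) ≤
      ∫ x, ‖G x + t • (h x • G x + w x • ∇ h x)‖ ^ 2 ∂μ := by
  have hq := hw.exponent_pos
  have hth (x : E) : |t * h x| ≤ 1 := by
    rw [abs_mul]
    exact (mul_le_mul_of_nonneg_left (hC x) (abs_nonneg t)).trans ht
  have hgrad (x : E) : ∇ (fun y ↦ 1 + t * h y) x = t • ∇ h x :=
    gradient_const_add_const_mul (hh.differentiable (by simp) x) 1 t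
  have hvar := hw.hasD12Gradient.mul_left (η := fun x ↦ 1 + t * h x) (C := 2)
    (contDiff_const.add (contDiff_const.mul hh))
    (fun x ↦ (abs_add_le _ _).trans (by rw [abs_one]; linarith [hth x]))
    (fun x ↦ by
      rw [hgrad, norm_smul, mul_left_comm, Real.norm_eq_abs]
      linarith [mul_le_mul_of_nonneg_left (hC' x) (abs_nonneg t)])
  obtain ⟨hint, hle⟩ := hw.integrable_powDensity_and_le hvar
  have hbernoulli := hw.one_add_mul_integral_le (fun x ↦ neg_le_of_abs_le (hth x))
    (hw.integrable_mul_powDensity (continuous_const.mul hh.continuous) hth) hint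
  simp only [mul_assoc t, integral_const_mul] at hbernoulli
  calc S * (1 + q * (t * ∫ x, h x * powDensity ρ q w x ∂μ)) ^ (2 / q)
      ≤ S * (∫ x, powDensity ρ q (fun y ↦ (1 + t * h y) * w y) x ∂μ) ^ (2 / q) := by
        have := hw.pos.le
        gcongr
    _ ≤ ∫ x, ‖(1 + t * h x) • G x + w x • ∇ (fun y ↦ 1 + t * h y) x‖ ^ 2 ∂μ := hle
    _ = ∫ x, ‖G x + t • (h x • G x + w x • ∇ h x)‖ ^ 2 ∂μ := by
        refine integral_congr_ae (ae_of_all _ fun x ↦ ?_)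
        simp only [hgrad, add_smul, one_smul, mul_smul, smul_add, smul_comm (w x) t, add_assoc]

theorem euler_lagrange (hw : IsExtremal μ ρ q S w G) (hh : ContDiff ℝ ∞ h)
    (hC : ∀ x, |h x| ≤ C) (hC' : ∀ x, bracket x * ‖∇ h x‖ ≤ C) :
    ∫ x, inner ℝ (G x) (h x • G x + w x • ∇ h x) ∂μ = S * ∫ x, h x * powDensity ρ q w x ∂μ := by
  have hvar := (hw.hasD12Gradient.mul_left hh hC hC').memLp_gradient
  refine eq_mul_of_eventually_rpow_le hw.exponent_pos.ne'
    (c := ∫ x, ‖h x • G x + w x • ∇ h x‖ ^ 2 ∂μ) ?_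
  have hsmall : ∀ᶠ t : ℝ in 𝓝 0, |t| * C < 1 :=
    (by fun_prop : Continuous fun t : ℝ ↦ |t| * C).continuousAt.eventually_lt_const (by simp)
  have hpos : ∀ᶠ t : ℝ in 𝓝 0, 0 < 1 + q * (t * ∫ x, h x * powDensity ρ q w x ∂μ) :=
    (by fun_prop : Continuous fun t : ℝ ↦ 1 + q * (t * ∫ x, h x * powDensity ρ q w x ∂μ))
      |>.continuousAt.eventually_const_lt (by simp)
  filter_upwards [hsmall, hpos] with t ht hta
  rw [← hw.integral_norm_sq, ← integral_norm_add_smul_sq hw.hasD12Gradient.memLp_gradient hvar t,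
    hw.integral_norm_sq]
  exact hw.le_integral_norm_add_smul_sq hh hC hC' ht.le hta.le

/-- Test the Euler–Lagrange equation with `η² w`. -/
theorem integral_norm_smul_add_smul_sq (hw : IsExtremal μ ρ q S w G) (hη : ContDiff ℝ ∞ η)
    (hC : ∀ x, |η x| ≤ C) (hC' : ∀ x, bracket x * ‖∇ η x‖ ≤ C) :
    ∫ x, ‖η x • G x + w x • ∇ η x‖ ^ 2 ∂μ =
      S * ∫ x, η x ^ 2 * powDensity ρ q w x ∂μ + ∫ x, w x ^ 2 * ‖∇ η x‖ ^ 2 ∂μ := by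
  have hgrad (x : E) : ∇ (fun y ↦ η y ^ 2) x = (2 * η x) • ∇ η x :=
    gradient_sq (hη.differentiable (by simp) x)
  have hη2 : ContDiff ℝ ∞ fun x ↦ η x ^ 2 := hη.pow 2
  have hC0 : 0 ≤ C := (abs_nonneg _).trans (hC 0)
  have hC2 (x : E) : |η x ^ 2| ≤ 2 * C ^ 2 := by
    rw [abs_pow]
    nlinarith [pow_le_pow_left₀ (abs_nonneg _) (hC x) 2]
  have hC2' (x : E) : bracket x * ‖∇ (fun y ↦ η y ^ 2) x‖ ≤ 2 * C ^ 2 := by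
    have hb := bracket_pos x
    rw [hgrad, norm_smul, norm_mul, Real.norm_two, Real.norm_eq_abs]
    nlinarith [mul_le_mul (hC x) (hC' x) (by positivity) hC0]
  have hsq := (hw.hasD12Gradient.mul_left hη hC hC').memLp_gradient.integrable_norm_pow two_ne_zero
  have hinner := integrable_inner hw.hasD12Gradient.memLp_gradient
    (hw.hasD12Gradient.mul_left hη2 hC2 hC2').memLp_gradient
  have hexpand (x : E) : w x ^ 2 * ‖∇ η x‖ ^ 2 = ‖η x • G x + w x • ∇ η x‖ ^ 2 -
      inner ℝ (G x) (η x ^ 2 • G x + w x • ∇ (fun y ↦ η y ^ 2) x) := by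
    rw [norm_add_sq_real, norm_smul, norm_smul, mul_pow, mul_pow, Real.norm_eq_abs,
      Real.norm_eq_abs, sq_abs, sq_abs, hgrad]
    simp only [inner_add_right, real_inner_smul_left, real_inner_smul_right,
      real_inner_self_eq_norm_sq]
    ring
  simp only [hexpand]
  rw [integral_sub hsq hinner, hw.euler_lagrange hη2 hC2 hC2']
  ring

/-- Hölder's inequality for `η² ρ |w|^q = (ρ |w|^q)^{1 - 2/q} (ρ |η w|^q)^{2/q}`. -/
theorem mul_setIntegral_sq_mul_powDensity_le (hw : IsExtremal μ ρ q S w G) {H : E → E}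
    (hu : HasD12Gradient μ (fun x ↦ η x * w x) H) (A : Set E) :
    S * ∫ x in A, η x ^ 2 * powDensity ρ q w x ∂μ ≤
      (∫ x in A, powDensity ρ q w x ∂μ) ^ (1 - 2 / q) * ∫ x, ‖H x‖ ^ 2 ∂μ := by
  have hq := hw.exponent_pos
  have hq2 : 2 / q ≤ 1 := (div_le_one hq).2 hw.two_lt.le
  have hS := hw.pos
  obtain ⟨hint, hle⟩ := hw.integrable_powDensity_and_le hu
  have hsplit (x : E) : η x ^ 2 * powDensity ρ q w x = powDensity ρ q w x ^ (1 - 2 / q) *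
      powDensity ρ q (fun y ↦ η y * w y) x ^ (2 / q) := by
    have hW := hw.powDensity_nonneg w x
    rw [powDensity_mul, Real.mul_rpow (by positivity) hW, ← Real.rpow_mul (abs_nonneg _),
      mul_div_cancel₀ _ hq.ne', Real.rpow_two, sq_abs, mul_left_comm,
      ← Real.rpow_add_of_nonneg hW (sub_nonneg.2 hq2) (by positivity), sub_add_cancel,
      Real.rpow_one]
  have hW : 0 ≤ ∫ x in A, powDensity ρ q w x ∂μ := integral_nonneg (hw.powDensity_nonneg w)
  calc S * ∫ x in A, η x ^ 2 * powDensity ρ q w x ∂μ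
      ≤ S * ((∫ x in A, powDensity ρ q w x ∂μ) ^ (1 - 2 / q) *
          (∫ x in A, powDensity ρ q (fun y ↦ η y * w y) x ∂μ) ^ (2 / q)) := by
        simp only [hsplit]
        gcongr
        exact integral_rpow_mul_rpow_le hw.integrable_powDensity.integrableOn hint.integrableOn
          (hw.powDensity_nonneg w) (hw.powDensity_nonneg _) (sub_nonneg.2 hq2) (by positivity)
          (sub_add_cancel _ _)
    _ ≤ S * ((∫ x in A, powDensity ρ q w x ∂μ) ^ (1 - 2 / q) *
          (∫ x, powDensity ρ q (fun y ↦ η y * w y) x ∂μ) ^ (2 / q)) := by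
        gcongr ?_ * (?_ * ?_ ^ _)
        · exact integral_nonneg (hw.powDensity_nonneg _)
        · exact setIntegral_le_integral hint (ae_of_all _ (hw.powDensity_nonneg _))
    _ ≤ (∫ x in A, powDensity ρ q w x ∂μ) ^ (1 - 2 / q) * ∫ x, ‖H x‖ ^ 2 ∂μ := by
        rw [mul_left_comm]
        gcongr

theorem exists_setIntegral_powDensity_rpow_le (hw : IsExtremal μ ρ q S w G) :
    ∃ m : ℕ, (∫ x in (closedBall 0 m)ᶜ, powDensity ρ q w x ∂μ) ^ (1 - 2 / q) ≤ 1 / 3 := by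
  have hp : 0 < 1 - 2 / q := sub_pos.2 ((div_lt_one hw.exponent_pos).2 hw.two_lt)
  have htail := (tendsto_setIntegral_compl_closedBall hw.integrable_powDensity 0).rpow_const
    (p := 1 - 2 / q) (Or.inr hp.le)
  rw [Real.zero_rpow hp.ne'] at htail
  exact (htail.eventually_le_const (by norm_num)).exists

theorem hasD12Gradient_truncBracket_mul (hw : IsExtremal μ ρ q S w G) (n : ℕ) :
    HasD12Gradient μ (fun x ↦ truncBracket n x * w x) (truncGradient w G n) :=
  hw.hasD12Gradient.mul_left (contDiff_truncBracket n) (abs_truncBracket_le n)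
    fun x ↦ (bracket_mul_norm_gradient_truncBracket_le n x).trans (truncBracket_le n x)

theorem integral_inv_bracket_mul_truncBracket_mul_sq_le (hw : IsExtremal μ ρ q S w G)
    (hd : 5 ≤ finrank ℝ E) (n : ℕ) :
    ∫ x, ((bracket x)⁻¹ * (truncBracket n x * w x)) ^ 2 ∂μ ≤
      4 / 9 * ∫ x, ‖truncGradient w G n x‖ ^ 2 ∂μ := by
  refine ((hw.hasD12Gradient_truncBracket_mul n).hardy_inequality (by lia)).trans ?_
  have hm : (3 : ℝ) ≤ finrank ℝ E - 2 := by
    have : (5 : ℝ) ≤ finrank ℝ E := by exact_mod_cast hd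
    linarith
  have hconst : (2 / (finrank ℝ E - 2 : ℝ)) ^ 2 ≤ 4 / 9 :=
    calc (2 / (finrank ℝ E - 2 : ℝ)) ^ 2 ≤ (2 / 3) ^ 2 := by gcongr
      _ = 4 / 9 := by norm_num
  gcongr

theorem integrable_truncBracket_sq_mul_powDensity (hw : IsExtremal μ ρ q S w G) (n : ℕ) :
    Integrable (fun x ↦ truncBracket n x ^ 2 * powDensity ρ q w x) μ :=
  hw.integrable_mul_powDensity ((contDiff_truncBracket n).continuous.pow 2) fun x ↦ by
    rw [abs_pow]
    exact pow_le_pow_left₀ (abs_nonneg _) (abs_truncBracket_le n x) 2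

theorem exists_mul_integral_truncBracket_sq_mul_powDensity_le (hw : IsExtremal μ ρ q S w G) :
    ∃ R, ∀ n, S * ∫ x, truncBracket n x ^ 2 * powDensity ρ q w x ∂μ ≤
      R + 1 / 3 * ∫ x, ‖truncGradient w G n x‖ ^ 2 ∂μ := by
  have hS := hw.pos
  obtain ⟨m, hm⟩ := hw.exists_setIntegral_powDensity_rpow_le
  refine ⟨S * (1 + m ^ 2), fun n ↦ ?_⟩
  have hW := hw.integrable_powDensity
  have hint := hw.integrable_truncBracket_sq_mul_powDensity n
  have hball : ∫ x in closedBall 0 m, truncBracket n x ^ 2 * powDensity ρ q w x ∂μ ≤ 1 + m ^ 2 :=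
    calc ∫ x in closedBall 0 m, truncBracket n x ^ 2 * powDensity ρ q w x ∂μ
        ≤ ∫ x in closedBall 0 m, (1 + m ^ 2) * powDensity ρ q w x ∂μ := by
          refine setIntegral_mono_on hint.integrableOn (hW.const_mul _).integrableOn
            measurableSet_closedBall fun x hx ↦ mul_le_mul_of_nonneg_right ?_
              (hw.powDensity_nonneg w x)
          refine (pow_le_pow_left₀ (truncBracket_nonneg n x)
            (truncBracket_le_bracket n x) 2).trans ?_
          rw [bracket_sq]
          gcongr
          exact mem_closedBall_zero_iff.1 hx
      _ ≤ ∫ x, (1 + m ^ 2) * powDensity ρ q w x ∂μ :=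
          setIntegral_le_integral (hW.const_mul _) (ae_of_all _ fun x ↦
            mul_nonneg (by positivity) (hw.powDensity_nonneg w x))
      _ = 1 + m ^ 2 := by rw [integral_const_mul, hw.integral_powDensity, mul_one]
  rw [← integral_add_compl measurableSet_closedBall hint, mul_add]
  refine add_le_add (mul_le_mul_of_nonneg_left hball hS.le) ?_
  refine (hw.mul_setIntegral_sq_mul_powDensity_le (hw.hasD12Gradient_truncBracket_mul n) _).trans ?_
  exact mul_le_mul_of_nonneg_right hm (integral_nonneg fun x ↦ by positivity)

theorem integral_norm_truncGradient_sq (hw : IsExtremal μ ρ q S w G) (n : ℕ) :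
    ∫ x, ‖truncGradient w G n x‖ ^ 2 ∂μ =
      S * ∫ x, truncBracket n x ^ 2 * powDensity ρ q w x ∂μ +
        ∫ x, w x ^ 2 * ‖∇ (truncBracket n) x‖ ^ 2 ∂μ :=
  hw.integral_norm_smul_add_smul_sq (contDiff_truncBracket n) (abs_truncBracket_le n)
    fun x ↦ (bracket_mul_norm_gradient_truncBracket_le n x).trans (truncBracket_le n x)

/-- In dimension at least five, Hardy's constant `4 / 9` and the tail factor `1 / 3` add up to less
than one, so that the energy of `truncBracket n * w` can be absorbed. -/
theorem exists_integral_norm_truncGradient_sq_le (hw : IsExtremal μ ρ q S w G)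
    (hd : 5 ≤ finrank ℝ E) : ∃ M, ∀ n, ∫ x, ‖truncGradient w G n x‖ ^ 2 ∂μ ≤ M := by
  obtain ⟨R, hR⟩ := hw.exists_mul_integral_truncBracket_sq_mul_powDensity_le
  refine ⟨9 / 2 * R, fun n ↦ ?_⟩
  have hhardy := hw.integral_inv_bracket_mul_truncBracket_mul_sq_le hd n
  have hgrad : ∫ x, w x ^ 2 * ‖∇ (truncBracket n) x‖ ^ 2 ∂μ ≤
      ∫ x, ((bracket x)⁻¹ * (truncBracket n x * w x)) ^ 2 ∂μ :=
    integral_mono_of_nonneg (ae_of_all _ fun x ↦ by positivity)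
      (hw.hasD12Gradient_truncBracket_mul n).memLp.integrable_sq
      (ae_of_all _ fun x ↦ sq_mul_norm_gradient_truncBracket_sq_le n x (w x))
  linarith [hw.integral_norm_truncGradient_sq n, hR n]

theorem integrable_sq (hw : IsExtremal μ ρ q S w G) (hd : 5 ≤ finrank ℝ E) :
    Integrable (fun x ↦ w x ^ 2) μ := by
  obtain ⟨M, hM⟩ := hw.exists_integral_norm_truncGradient_sq_le hd
  refine (integrable_and_integral_le_of_tendsto (L := 4 / 9 * M)
    (fun n ↦ (hw.hasD12Gradient_truncBracket_mul n).memLp.integrable_sq)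
    (fun n x ↦ by positivity) (ae_of_all _ fun x ↦ ?_)
    (fun n ↦ (hw.integral_inv_bracket_mul_truncBracket_mul_sq_le hd n).trans
      (mul_le_mul_of_nonneg_left (hM n) (by norm_num))) tendsto_const_nhds).1
  simpa only [inv_mul_cancel_left₀ (bracket_pos x).ne'] using
    (((tendsto_truncBracket x).mul_const (w x)).const_mul (bracket x)⁻¹).pow 2

theorem integrable_bracket_sq_mul_powDensity (hw : IsExtremal μ ρ q S w G)
    (hd : 5 ≤ finrank ℝ E) : Integrable (fun x ↦ bracket x ^ 2 * powDensity ρ q w x) μ := by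
  obtain ⟨M, hM⟩ := hw.exists_integral_norm_truncGradient_sq_le hd
  refine (integrable_and_integral_le_of_tendsto (L := M / S)
    hw.integrable_truncBracket_sq_mul_powDensity
    (fun n x ↦ mul_nonneg (sq_nonneg _) (hw.powDensity_nonneg w x))
    (ae_of_all _ fun x ↦ ((tendsto_truncBracket x).pow 2).mul_const _)
    (fun n ↦ (le_div_iff₀' hw.pos).2 ?_) tendsto_const_nhds).1
  have hgrad : 0 ≤ ∫ x, w x ^ 2 * ‖∇ (truncBracket n) x‖ ^ 2 ∂μ :=
    integral_nonneg fun x ↦ by positivity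
  linarith [hw.integral_norm_truncGradient_sq n, hM n]

theorem integrable_bracket_sq_mul_norm_sq (hw : IsExtremal μ ρ q S w G)
    (hd : 5 ≤ finrank ℝ E) : Integrable (fun x ↦ bracket x ^ 2 * ‖G x‖ ^ 2) μ := by
  obtain ⟨M, hM⟩ := hw.exists_integral_norm_truncGradient_sq_le hd
  have hpointwise (n : ℕ) (x : E) : truncBracket n x ^ 2 * ‖G x‖ ^ 2 ≤
      2 * ‖truncGradient w G n x‖ ^ 2 +
        2 * ((bracket x)⁻¹ * (truncBracket n x * w x)) ^ 2 := by
    have hsub : truncBracket n x • G x =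
        truncGradient w G n x - w x • ∇ (truncBracket n) x := by simp [truncGradient]
    have hpar := parallelogram_law_with_norm ℝ (truncGradient w G n x)
      (w x • ∇ (truncBracket n) x)
    have hgrad := sq_mul_norm_gradient_truncBracket_sq_le n x (w x)
    rw [← hsub, norm_smul, norm_smul, Real.norm_of_nonneg (truncBracket_nonneg n x)] at hpar
    rw [← sq_abs (w x), ← Real.norm_eq_abs] at hgrad
    nlinarith [sq_nonneg ‖truncGradient w G n x + w x • ∇ (truncBracket n) x‖]
  have hdom (n : ℕ) := (((hw.hasD12Gradient_truncBracket_mul n).memLp_gradient.integrable_norm_pow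
    two_ne_zero).const_mul 2).add
      ((hw.hasD12Gradient_truncBracket_mul n).memLp.integrable_sq.const_mul 2)
  have hint (n : ℕ) : Integrable (fun x ↦ truncBracket n x ^ 2 * ‖G x‖ ^ 2) μ := by
    refine (hdom n).mono' ?_ (ae_of_all _ fun x ↦ ?_)
    · exact ((contDiff_truncBracket n).continuous.pow 2).aestronglyMeasurable.mul
        (hw.hasD12Gradient.memLp_gradient.1.norm.pow 2)
    · rw [Real.norm_of_nonneg (by positivity)]
      exact hpointwise n x
  refine (integrable_and_integral_le_of_tendsto (L := 3 * M) hint (fun n x ↦ by positivity)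
    (ae_of_all _ fun x ↦ ((tendsto_truncBracket x).pow 2).mul_const _)
    (fun n ↦ (integral_mono (hint n) (hdom n) (hpointwise n)).trans ?_) tendsto_const_nhds).1
  simp only [Pi.add_apply]
  rw [integral_add (((hw.hasD12Gradient_truncBracket_mul n).memLp_gradient.integrable_norm_pow
    two_ne_zero).const_mul 2) ((hw.hasD12Gradient_truncBracket_mul n).memLp.integrable_sq.const_mul
    2), integral_const_mul, integral_const_mul]
  have hnonneg : 0 ≤ ∫ x, ‖truncGradient w G n x‖ ^ 2 ∂μ := integral_nonneg fun x ↦ by positivity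
  linarith [hw.integral_inv_bracket_mul_truncBracket_mul_sq_le hd n, hM n]

end IsExtremal

end Extremal

/-! ### Unbounded multipliers -/

section Directional

open Module

variable {E : Type*} [NormedAddCommGroup E] [InnerProductSpace ℝ E] [MeasurableSpace E]
  [BorelSpace E] {μ : Measure E}
  {ρ u f g w : E → ℝ} {q S C : ℝ} {G H V : E → E} {m : ℕ}

theorem integrable_mul_cutoff (hg : Integrable g μ) (n : ℕ) :
    Integrable (fun x ↦ g x * cutoff n x) μ :=
  hg.norm.mono' (hg.1.mul (contDiff_cutoff n).continuous.aestronglyMeasurable)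
    (ae_of_all _ fun x ↦ abs_mul_cutoff_le n x (g x))

theorem tendsto_integral_mul_cutoff (hg : Integrable g μ) :
    Tendsto (fun n ↦ ∫ x, g x * cutoff n x ∂μ) atTop (𝓝 (∫ x, g x ∂μ)) := by
  refine tendsto_integral_of_dominated_convergence (fun x ↦ ‖g x‖)
    (fun n ↦ (integrable_mul_cutoff hg n).1) hg.norm
    (fun n ↦ ae_of_all _ fun x ↦ abs_mul_cutoff_le n x (g x)) (ae_of_all _ fun x ↦ ?_)
  simpa using (tendsto_cutoff x).const_mul (g x)

theorem integrable_mul_of_abs_le_bracket_pow (hg : Integrable (fun x ↦ bracket x ^ m * g x) μ)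
    (hf : Continuous f) (hC : ∀ x, |f x| ≤ C * bracket x ^ m) :
    Integrable (fun x ↦ f x * g x) μ := by
  have hb (x : E) := pow_pos (bracket_pos x) m
  have hquot : Continuous fun x ↦ f x / bracket x ^ m :=
    hf.div (continuous_bracket.pow m) fun x ↦ (hb x).ne'
  refine (hg.bdd_mul (c := C) hquot.aestronglyMeasurable (ae_of_all _ fun x ↦ ?_)).congr
    (ae_of_all _ fun x ↦ ?_)
  · rw [norm_div, Real.norm_of_nonneg (hb x).le]
    exact (div_le_iff₀ (hb x)).2 (hC x)
  · simp only [← mul_assoc, div_mul_cancel₀ _ (hb x).ne']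

theorem integrable_bracket_mul_norm_smul (hu : AEStronglyMeasurable u μ)
    (hH : AEStronglyMeasurable H μ) (hu2 : Integrable (fun x ↦ u x ^ 2) μ)
    (hH2 : Integrable (fun x ↦ bracket x ^ 2 * ‖H x‖ ^ 2) μ) :
    Integrable (fun x ↦ bracket x * ‖u x • H x‖) μ := by
  refine (hu2.add hH2).mono' (continuous_bracket.aestronglyMeasurable.mul (hu.smul hH).norm)
    (ae_of_all _ fun x ↦ ?_)
  have hb := bracket_pos x
  rw [Real.norm_of_nonneg (by positivity), norm_smul, Pi.add_apply, ← sq_abs (u x),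
    ← Real.norm_eq_abs, ← mul_pow]
  nlinarith [sq_nonneg (‖u x‖ - bracket x * ‖H x‖), sq_nonneg ‖u x‖,
    sq_nonneg (bracket x * ‖H x‖)]

variable [FiniteDimensional ℝ E]

theorem tendsto_integral_inner_gradient_mul_cutoff (hV : AEStronglyMeasurable V μ)
    (hVm : Integrable (fun x ↦ bracket x ^ m * ‖V x‖) μ) (hf : ContDiff ℝ 1 f)
    (hC : ∀ x, |f x| ≤ C * bracket x ^ (m + 1)) (hC' : ∀ x, ‖∇ f x‖ ≤ C * bracket x ^ m) :
    Tendsto (fun n ↦ ∫ x, inner ℝ (V x) (∇ (fun y ↦ f y * cutoff n y) x) ∂μ) atTop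
      (𝓝 (∫ x, inner ℝ (V x) (∇ f x) ∂μ)) := by
  have hfd (x : E) : DifferentiableAt ℝ f x := hf.differentiable one_ne_zero x
  refine tendsto_integral_of_dominated_convergence (fun x ↦ 3 * C * (bracket x ^ m * ‖V x‖))
    (fun n ↦ ?_) (hVm.const_mul _) (fun n ↦ ae_of_all _ fun x ↦ ?_)
    (ae_of_all _ fun x ↦ tendsto_const_nhds.inner (tendsto_gradient_mul_cutoff (hfd x)))
  · have hfn : ContDiff ℝ 1 fun x ↦ f x * cutoff n x := hf.mul ((contDiff_cutoff n).of_le (by simp))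
    exact hV.inner (continuous_gradient hfn).aestronglyMeasurable
  · have hCm : 0 ≤ C * bracket x ^ m := (norm_nonneg _).trans (hC' x)
    calc ‖inner ℝ (V x) (∇ (fun y ↦ f y * cutoff n y) x)‖
        ≤ ‖V x‖ * (3 * C * bracket x ^ m * cutoff n x) :=
          (norm_inner_le_norm _ _).trans
            (by gcongr; exact norm_gradient_mul_cutoff_le n (hfd x) (hC x) (hC' x))
      _ ≤ ‖V x‖ * (3 * C * bracket x ^ m) := by
          refine mul_le_mul_of_nonneg_left (mul_le_of_le_one_right ?_ (cutoff_le_one n x))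
            (norm_nonneg _)
          linarith
      _ = 3 * C * (bracket x ^ m * ‖V x‖) := by ring

variable [μ.IsAddHaarMeasure]

theorem HasD12Gradient.integral_sq_mul_inner_gradient_of_integrable (hu : HasD12Gradient μ u H)
    (hu2 : Integrable (fun x ↦ u x ^ 2) μ) (hH2 : Integrable (fun x ↦ bracket x ^ 2 * ‖H x‖ ^ 2) μ)
    (hf : ContDiff ℝ 1 f) (hC : ∀ x, |f x| ≤ C * bracket x) (hC' : ∀ x, ‖∇ f x‖ ≤ C) (v : E) :
    ∫ x, u x ^ 2 * inner ℝ (∇ f x) v ∂μ = -2 * ∫ x, u x * inner ℝ (H x) v * f x ∂μ := by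
  have hC0 : 0 ≤ C := (norm_nonneg _).trans (hC' 0)
  have hint : Integrable (fun x ↦ u x * inner ℝ (H x) v * f x) μ := by
    refine ((integrable_bracket_mul_norm_smul hu.aestronglyMeasurable hu.memLp_gradient.1 hu2
      hH2).const_mul (C * ‖v‖)).mono' ((hu.aestronglyMeasurable.mul
        (hu.memLp_gradient.1.inner_const)).mul hf.continuous.aestronglyMeasurable)
      (ae_of_all _ fun x ↦ ?_)
    calc ‖u x * inner ℝ (H x) v * f x‖ ≤ ‖u x‖ * (‖H x‖ * ‖v‖) * (C * bracket x) := by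
          rw [norm_mul, norm_mul]
          gcongr
          · exact norm_inner_le_norm _ _
          · exact hC x
      _ = C * ‖v‖ * (bracket x * ‖u x • H x‖) := by rw [norm_smul]; ring
  have hidentity (n : ℕ) : ∫ x, inner ℝ (u x ^ 2 • v) (∇ (fun y ↦ f y * cutoff n y) x) ∂μ =
      -2 * ∫ x, u x * inner ℝ (H x) v * f x * cutoff n x ∂μ := by
    simp only [real_inner_smul_left, real_inner_comm _ v, mul_assoc (u _ * _)]
    have hcC : C * (n + 1) ≤ 3 * C * (n + 1) := by gcongr; linarith
    refine hu.integral_sq_mul_inner_gradient (C := 3 * C * (n + 1))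
      (hf.mul ((contDiff_cutoff n).of_le (by simp))) (fun x ↦ ?_) (fun x ↦ ?_) v
    · simpa only [pow_one] using (bracket_pow_mul_abs_mul_cutoff_le (l := 1) (m := 1) n rfl
        (by simpa only [pow_one] using hC x)).trans hcC
    · exact bracket_pow_mul_norm_gradient_mul_cutoff_le n (hf.differentiable one_ne_zero x)
        (add_zero 2) (by simpa using hC x) (by simpa using hC' x)
  have hleft := tendsto_integral_inner_gradient_mul_cutoff (m := 0) (hu2.1.smul_const v)
    (by simpa [norm_smul] using hu2.mul_const ‖v‖) hf (by simpa using hC) (by simpa using hC')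
  simpa only [real_inner_smul_left, real_inner_comm _ v] using tendsto_nhds_unique hleft
    ((funext hidentity) ▸ (tendsto_integral_mul_cutoff hint).const_mul (-2))

theorem IsExtremal.integral_inner_gradient_mul_cutoff (hw : IsExtremal μ ρ q S w G)
    (hf : ContDiff ℝ ∞ f) (hC : ∀ x, |f x| ≤ C * bracket x ^ 2)
    (hC' : ∀ x, ‖∇ f x‖ ≤ C * bracket x) (hfG : Integrable (fun x ↦ f x * ‖G x‖ ^ 2) μ) (n : ℕ) :
    ∫ x, inner ℝ (w x • G x) (∇ (fun y ↦ f y * cutoff n y) x) ∂μ =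
      S * ∫ x, f x * powDensity ρ q w x * cutoff n x ∂μ -
        ∫ x, f x * ‖G x‖ ^ 2 * cutoff n x ∂μ := by
  have hC0 : 0 ≤ C := by simpa [bracket] using (abs_nonneg _).trans (hC 0)
  have hfn : ContDiff ℝ ∞ fun x ↦ f x * cutoff n x := hf.mul (contDiff_cutoff n)
  have hbound (x : E) : |f x * cutoff n x| ≤ 3 * C * (n + 1) :=
    calc |f x * cutoff n x| ≤ C * (n + 1) := by
          simpa using bracket_pow_mul_abs_mul_cutoff_le n (zero_add 2) (hC x)
      _ ≤ 3 * C * (n + 1) := by gcongr; linarith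
  have hbound' (x : E) : bracket x * ‖∇ (fun y ↦ f y * cutoff n y) x‖ ≤ 3 * C * (n + 1) := by
    simpa using bracket_pow_mul_norm_gradient_mul_cutoff_le (l := 1) (m := 1) n
      (hf.differentiable (by simp) x) rfl (hC x) (by simpa using hC' x)
  have hG := integrable_inner hw.hasD12Gradient.memLp_gradient
    (hw.hasD12Gradient.mul_left hfn hbound hbound').memLp_gradient
  simp only [mul_right_comm _ _ (cutoff n _)]
  rw [← hw.euler_lagrange hfn hbound hbound',
    ← integral_sub hG (by simpa only [mul_right_comm] using integrable_mul_cutoff hfG n)]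
  refine integral_congr_ae (ae_of_all _ fun x ↦ ?_)
  simp only [inner_add_right, real_inner_smul_left, real_inner_smul_right,
    real_inner_self_eq_norm_sq]
  ring

theorem IsExtremal.euler_lagrange_of_le_bracket (hw : IsExtremal μ ρ q S w G)
    (hd : 5 ≤ finrank ℝ E) (hf : ContDiff ℝ ∞ f) (hC : ∀ x, |f x| ≤ C * bracket x ^ 2)
    (hC' : ∀ x, ‖∇ f x‖ ≤ C * bracket x) :
    ∫ x, f x * ‖G x‖ ^ 2 ∂μ + ∫ x, inner ℝ (w x • G x) (∇ f x) ∂μ =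
      S * ∫ x, f x * powDensity ρ q w x ∂μ := by
  have hG2 := hw.integrable_bracket_sq_mul_norm_sq hd
  have hfG := integrable_mul_of_abs_le_bracket_pow hG2 hf.continuous hC
  have hfW := integrable_mul_of_abs_le_bracket_pow (hw.integrable_bracket_sq_mul_powDensity hd)
    hf.continuous hC
  have hwm := hw.hasD12Gradient.aestronglyMeasurable
  have hGm := hw.hasD12Gradient.memLp_gradient.1
  have hwG := integrable_bracket_mul_norm_smul hwm hGm (hw.integrable_sq hd) hG2
  have hleft := tendsto_integral_inner_gradient_mul_cutoff (m := 1)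
    (V := fun x ↦ w x • G x) (hwm.smul hGm) (by simpa only [pow_one] using hwG)
    (hf.of_le (by simp)) hC (by simpa only [pow_one] using hC')
  have hright := ((tendsto_integral_mul_cutoff hfW).const_mul S).sub
    (tendsto_integral_mul_cutoff hfG)
  simp only [← hw.integral_inner_gradient_mul_cutoff hf hC hC' hfG] at hright
  linarith [tendsto_nhds_unique hleft hright]

/-- Test the Euler–Lagrange equation with `⟪v, x⟫² w`. -/
theorem IsExtremal.integral_inner_sq_mul (hw : IsExtremal μ ρ q S w G) (hd : 5 ≤ finrank ℝ E)
    (v : E) : ∫ x, inner ℝ v x ^ 2 * ‖G x‖ ^ 2 ∂μ - ‖v‖ ^ 2 * ∫ x, w x ^ 2 ∂μ =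
      S * ∫ x, inner ℝ v x ^ 2 * powDensity ρ q w x ∂μ := by
  have hgrad (x : E) : ∇ (fun y ↦ inner ℝ v y) x = v := (hasGradientAt_inner_left v x).gradient
  have hgrad2 (x : E) : ∇ (fun y ↦ inner ℝ v y ^ 2) x = (2 * inner ℝ v x) • v := by
    rw [gradient_sq (hasGradientAt_inner_left v x).differentiableAt, hgrad]
  have hinner (x : E) : |inner ℝ v x| ≤ ‖v‖ * bracket x :=
    (abs_real_inner_le_norm v x).trans (by gcongr; exact norm_le_bracket x)
  have hsmooth : ContDiff ℝ ∞ fun x : E ↦ inner ℝ v x := contDiff_const.inner ℝ contDiff_id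
  have hibp := hw.hasD12Gradient.integral_sq_mul_inner_gradient_of_integrable
    (hw.integrable_sq hd) (hw.integrable_bracket_sq_mul_norm_sq hd) (hsmooth.of_le (by simp))
    hinner (fun x ↦ (congrArg norm (hgrad x)).le) v
  have hel := hw.euler_lagrange_of_le_bracket hd (C := 2 * ‖v‖ ^ 2) (hsmooth.pow 2)
    (fun x ↦ ?_) (fun x ↦ ?_)
  · simp only [hgrad, hgrad2, real_inner_smul_left, real_inner_smul_right,
      real_inner_self_eq_norm_sq, integral_mul_const] at hibp hel
    have hcross : ∫ x, 2 * inner ℝ v x * (w x * inner ℝ (G x) v) ∂μ =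
        2 * ∫ x, w x * inner ℝ (G x) v * inner ℝ v x ∂μ := by
      rw [← integral_const_mul]
      exact integral_congr_ae (ae_of_all _ fun x ↦ by ring)
    linarith
  · linarith [abs_inner_sq_le x v, show 0 ≤ ‖v‖ ^ 2 * bracket x ^ 2 by positivity]
  · rw [hgrad2, norm_smul, norm_mul, Real.norm_two, Real.norm_eq_abs]
    nlinarith [mul_le_mul_of_nonneg_right (hinner x) (norm_nonneg v)]

end Directional

/-! ### Cylindrical weights and ground states -/

section ProductWeight

theorem locallyIntegrable_fintype_prod {ι : Type*} [Fintype ι] {f : ι → ℝ → ℝ}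
    (hf : ∀ i, LocallyIntegrable (f i)) : LocallyIntegrable fun x : ι → ℝ ↦ ∏ i, f i (x i) := by
  rw [locallyIntegrable_iff]
  intro K hK
  have hbox : IntegrableOn (fun x : ι → ℝ ↦ ∏ i, f i (x i))
      (univ.pi fun i ↦ (fun x ↦ x i) '' K) := by
    rw [IntegrableOn, volume_pi, Measure.restrict_pi_pi]
    exact Integrable.fintype_prod fun i ↦
      (hf i).integrableOn_isCompact (hK.image (continuous_apply i))
  exact hbox.mono_set fun x hx i _ ↦ mem_image_of_mem (fun y : ι → ℝ ↦ y i) hx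

theorem locallyIntegrable_euclideanSpace_prod {ι : Type*} [Fintype ι] {f : ι → ℝ → ℝ}
    (hf : ∀ i, LocallyIntegrable (f i)) :
    LocallyIntegrable fun x : EuclideanSpace ℝ ι ↦ ∏ i, f i (x i) := by
  refine (locallyIntegrable_map_homeomorph (PiLp.homeomorph 2 fun _ : ι ↦ ℝ)
    (f := fun x : ι → ℝ ↦ ∏ i, f i (x i))).1 ?_
  have hmap : Measure.map (PiLp.homeomorph 2 fun _ : ι ↦ ℝ) volume = volume :=
    (PiLp.volume_preserving_ofLp ι).map_eq
  rw [hmap]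
  exact locallyIntegrable_fintype_prod hf

theorem ae_apply_ne_zero {ι : Type*} [Fintype ι] (i : ι) :
    ∀ᵐ x : EuclideanSpace ℝ ι, x i ≠ 0 :=
  ((Measure.quasiMeasurePreserving_eval (fun _ : ι ↦ volume) i).comp
    (PiLp.volume_preserving_ofLp ι).quasiMeasurePreserving).ae (Measure.ae_ne volume (0 : ℝ))

end ProductWeight

section Cylindrical

variable {N k : ℕ} {σ : ℝ} {v w φ : Euc N → ℝ}

/-- The indices of the coordinates of `z` in the splitting `x = (t, z)`. -/
def zIndices (N k : ℕ) : Finset (Fin N) := {i | k ≤ (i : ℕ)}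

theorem mem_zIndices {i : Fin N} : i ∈ zIndices N k ↔ k ≤ (i : ℕ) := by simp [zIndices]

theorem zNorm_nonneg (x : Euc N) : 0 ≤ zNorm N k x := Real.sqrt_nonneg _

theorem zNorm_sq (x : Euc N) : zNorm N k x ^ 2 = ∑ i ∈ zIndices N k, x i ^ 2 := by
  rw [zNorm, ← Finset.sum_filter, ← zIndices,
    Real.sq_sqrt (Finset.sum_nonneg fun i _ ↦ sq_nonneg _)]

theorem continuous_zNorm : Continuous (zNorm N k) := by
  have hsqrt : zNorm N k = fun x ↦ √(∑ i ∈ zIndices N k, x i ^ 2) := by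
    ext x
    rw [zNorm, zIndices, Finset.sum_filter]
  rw [hsqrt]
  fun_prop

theorem abs_apply_le_zNorm (x : Euc N) {i : Fin N} (hi : i ∈ zIndices N k) :
    |x i| ≤ zNorm N k x := by
  refine abs_le_of_sq_le_sq ?_ (zNorm_nonneg x)
  rw [zNorm_sq]
  exact Finset.single_le_sum (f := fun j : Fin N ↦ x j ^ 2) (fun j _ ↦ sq_nonneg _) hi

theorem zNorm_le_norm (x : Euc N) : zNorm N k x ≤ ‖x‖ := by
  refine le_of_sq_le_sq ?_ (norm_nonneg x)
  rw [zNorm_sq, EuclideanSpace.real_norm_sq_eq]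
  exact Finset.sum_le_sum_of_subset_of_nonneg (Finset.filter_subset _ _) fun i _ _ ↦ sq_nonneg _

theorem card_zIndices (hk : k < N) : (zIndices N k).card = N - k := by
  rw [← Fin.card_Ici ⟨k, hk⟩]
  congr 1
  ext i
  simp [mem_zIndices, Fin.le_def]

theorem ae_zNorm_pos (hk : k < N) : ∀ᵐ x : Euc N, 0 < zNorm N k x :=
  (ae_apply_ne_zero (⟨k, hk⟩ : Fin N)).mono fun x hx ↦
    (abs_pos.2 hx).trans_le (abs_apply_le_zNorm x (mem_zIndices.2 le_rfl))

/-- Distribute the singularity evenly over the `N - k` coordinates of `z`, each of which is at most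
`|z|`, and use Tonelli. -/
theorem locallyIntegrable_zNorm_rpow_neg (hσ : 0 ≤ σ) (hk : σ < (N : ℝ) - k) :
    LocallyIntegrable fun x ↦ zNorm N k x ^ (-σ) := by
  have hkN : k < N := by exact_mod_cast sub_pos.1 (hσ.trans_lt hk)
  set a : ℝ := σ / (N - k)
  have hNk : 0 < (N : ℝ) - k := hσ.trans_lt hk
  have ha : 0 ≤ a := by positivity
  have hone : LocallyIntegrable fun t : ℝ ↦ |t| ^ (-a) :=
    locallyIntegrable_of_norm_le_rpow (C := 1) (α := a) (by simp)
      (by simpa using (div_lt_one hNk).2 hk)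
      (ae_of_all _ fun t ↦ by simp [abs_of_nonneg (Real.rpow_nonneg (abs_nonneg t) _)])
      (measurable_abs.pow_const _).aestronglyMeasurable
  have hprod : LocallyIntegrable fun x : Euc N ↦
      ∏ i : Fin N, if k ≤ (i : ℕ) then |x i| ^ (-a) else 1 :=
    locallyIntegrable_euclideanSpace_prod
      (f := fun (i : Fin N) t ↦ if k ≤ (i : ℕ) then |t| ^ (-a) else 1) fun i ↦ by
        split_ifs
        exacts [hone, locallyIntegrable_const 1]
  refine hprod.mono (continuous_zNorm.measurable.pow_const _).aestronglyMeasurable ?_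
  filter_upwards [ae_all_iff.2 fun i : Fin N ↦ ae_apply_ne_zero i] with x hx
  rw [← Finset.prod_filter, ← zIndices, Real.norm_of_nonneg (Real.rpow_nonneg (zNorm_nonneg x) _),
    Real.norm_of_nonneg (Finset.prod_nonneg fun _ _ ↦ by positivity)]
  calc zNorm N k x ^ (-σ) = ∏ _i ∈ zIndices N k, zNorm N k x ^ (-a) := by
        rw [Finset.prod_const, card_zIndices hkN, ← Real.rpow_mul_natCast (zNorm_nonneg x),
          Nat.cast_sub hkN.le, neg_mul, div_mul_cancel₀ σ hNk.ne']
    _ ≤ ∏ i ∈ zIndices N k, |x i| ^ (-a) :=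
        Finset.prod_le_prod (fun i _ ↦ Real.rpow_nonneg (zNorm_nonneg x) _) fun i hi ↦
          Real.rpow_le_rpow_of_nonpos (abs_pos.2 (hx i))
            (abs_apply_le_zNorm x hi) (neg_nonpos.2 ha)

theorem two_lt_twoStar (hN : 3 ≤ N) (hσ : σ < 2) : 2 < twoStar N σ := by
  have hN' : (3 : ℝ) ≤ N := by exact_mod_cast hN
  rw [twoStar, lt_div_iff₀ (by linarith)]
  linarith

theorem gradL2_eq_integral_gradient (v : Euc N → ℝ) : gradL2 N v = ∫ x, ‖∇ v x‖ ^ 2 := by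
  simp only [gradL2, norm_gradient]

theorem hsInt_eq_integral_powDensity (v : Euc N → ℝ) :
    hsInt N k σ v = ∫ x, powDensity (fun y ↦ zNorm N k y ^ (-σ)) (twoStar N σ) v x := rfl

theorem hsInt_const_mul (c : ℝ) (v : Euc N → ℝ) :
    hsInt N k σ (fun x ↦ c * v x) = |c| ^ twoStar N σ * hsInt N k σ v := by
  simp only [hsInt_eq_integral_powDensity, powDensity_mul, integral_const_mul]

theorem gradL2_const_mul (c : ℝ) (v : Euc N → ℝ) :
    gradL2 N (fun x ↦ c * v x) = c ^ 2 * gradL2 N v := by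
  have hfderiv (x : Euc N) : fderiv ℝ (fun y ↦ c * v y) x = c • fderiv ℝ v x :=
    congrFun (fderiv_const_smul_field c) x
  simp only [gradL2, hfderiv, norm_smul, mul_pow, Real.norm_eq_abs, sq_abs, integral_const_mul]

theorem hsInt_nonneg (v : Euc N → ℝ) : 0 ≤ hsInt N k σ v :=
  integral_nonneg fun x ↦ mul_nonneg (Real.rpow_nonneg (zNorm_nonneg x) _) (by positivity)

theorem Sconst_le_gradL2 (hv : MemD12 N v) (h1 : hsInt N k σ v = 1) :
    Sconst N k σ ≤ gradL2 N v := by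
  refine csInf_le ⟨0, ?_⟩ ⟨v, hv, h1, rfl⟩
  rintro _ ⟨u, -, -, rfl⟩
  exact integral_nonneg fun x ↦ by positivity

theorem IsTestFunction.memD12 (hφ : IsTestFunction φ) : MemD12 N φ :=
  ⟨fun _ ↦ φ, fun _ ↦ ⟨hφ.contDiff, hφ.hasCompactSupport⟩, by simp, by
    have hzero : eLpNorm (fun x ↦ fderiv ℝ φ x - fderiv ℝ φ x) 2 volume = 0 :=
      (eLpNorm_congr_norm_ae (g := fun _ ↦ (0 : ℝ)) (by simp)).trans eLpNorm_zero
    simp only [hzero, tendsto_const_nhds]⟩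

theorem IsTestFunction.Sconst_mul_hsInt_rpow_le (hφ : IsTestFunction φ) (hq : 0 < twoStar N σ) :
    Sconst N k σ * hsInt N k σ φ ^ (2 / twoStar N σ) ≤ gradL2 N φ := by
  have hgrad : 0 ≤ gradL2 N φ := integral_nonneg fun x ↦ by positivity
  rcases (hsInt_nonneg φ).eq_or_lt with h0 | hpos
  · rwa [← h0, Real.zero_rpow (by positivity), mul_zero]
  set r := hsInt N k σ φ ^ (1 / twoStar N σ)
  have hr : 0 < r := by positivity
  have hrq : r ^ twoStar N σ = hsInt N k σ φ := by
    rw [← Real.rpow_mul hpos.le, one_div_mul_cancel hq.ne', Real.rpow_one]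
  have hr2 : hsInt N k σ φ ^ (2 / twoStar N σ) = r ^ 2 := by
    rw [← Real.rpow_mul_natCast hpos.le]
    congr 1
    push_cast
    ring
  have hnormalized : hsInt N k σ (fun x ↦ r⁻¹ * φ x) = 1 := by
    rw [hsInt_const_mul, abs_of_pos (inv_pos.2 hr), Real.inv_rpow hr.le, hrq,
      inv_mul_cancel₀ hpos.ne']
  have hle := Sconst_le_gradL2 (hφ.mul_left (η := fun _ ↦ r⁻¹) contDiff_const).memD12 hnormalized
  rw [gradL2_const_mul, inv_pow, ← div_eq_inv_mul] at hle
  rw [hr2]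
  exact (le_div_iff₀ (by positivity)).1 hle

theorem hasD12Gradient_of_memD12 (hN : 3 ≤ N) (hv : MemD12 N v)
    (hvm : AEStronglyMeasurable v) : HasD12Gradient volume v (∇ v) := by
  obtain ⟨φ, hφ, hφv, hφv'⟩ := hv
  have htest (n : ℕ) : IsTestFunction (φ n) := ⟨(hφ n).1, (hφ n).2⟩
  have hN' : (3 : ℝ) ≤ N := by exact_mod_cast hN
  have hp : ENNReal.ofReal (2 * (N : ℝ) / ((N : ℝ) - 2)) ≠ 0 := by
    rw [Ne, ENNReal.ofReal_eq_zero, not_le]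
    apply div_pos <;> linarith
  have hmeasure : TendstoInMeasure volume φ atTop v :=
    tendstoInMeasure_of_tendsto_eLpNorm hp
      (fun n ↦ (htest n).continuous.aestronglyMeasurable) hvm
      (hφv.congr fun n ↦ eLpNorm_sub_comm _ _ _ _)
  obtain ⟨ns, hns, hae⟩ := hmeasure.exists_seq_tendsto_ae
  have hgrad : Measurable (∇ v) :=
    (InnerProductSpace.toDual ℝ (Euc N)).symm.continuous.measurable.comp (measurable_fderiv ℝ v)
  have hgrad' : Tendsto (fun n ↦ eLpNorm (∇ (φ n) - ∇ v) 2) atTop (𝓝 0) := by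
    refine hφv'.congr fun n ↦ eLpNorm_congr_norm_ae (ae_of_all _ fun x ↦ ?_)
    rw [Pi.sub_apply, gradient, gradient, ← map_sub, LinearIsometryEquiv.norm_map, norm_sub_rev]
  exact HasD12Gradient.of_tendsto_ae (by rw [finrank_euclideanSpace_fin]; lia)
    (fun n ↦ htest (ns n)) hgrad.aestronglyMeasurable hae (hgrad'.comp hns.tendsto_atTop)

theorem aestronglyMeasurable_of_integrable_hsDensity (hk : k < N) (hq : twoStar N σ ≠ 0)
    (hw : ∀ x, 0 ≤ w x) (h : Integrable fun x ↦ zNorm N k x ^ (-σ) * |w x| ^ twoStar N σ) :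
    AEStronglyMeasurable w := by
  have hm : AEMeasurable fun x ↦ (zNorm N k x ^ σ *
      (zNorm N k x ^ (-σ) * |w x| ^ twoStar N σ)) ^ (twoStar N σ)⁻¹ :=
    ((continuous_zNorm.measurable.pow_const σ).aemeasurable.mul h.1.aemeasurable).pow_const _
  refine (hm.congr ?_).aestronglyMeasurable
  filter_upwards [ae_zNorm_pos hk] with x hx
  rw [← mul_assoc, ← Real.rpow_add hx, add_neg_cancel, Real.rpow_zero, one_mul,
    abs_of_nonneg (hw x), Real.rpow_rpow_inv (hw x) hq]

theorem hasD12Gradient_of_groundState (hN : 3 ≤ N) (hk : k < N) (hσ : σ < 2)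
    (hw : GroundState N k σ w) : HasD12Gradient volume w (∇ w) := by
  obtain ⟨hD, hpos, hint, -⟩ := hw
  have hdensity : Integrable fun x ↦ zNorm N k x ^ (-σ) * |w x| ^ twoStar N σ :=
    Integrable.of_integral_ne_zero (by rw [← hsInt, hint]; exact one_ne_zero)
  exact hasD12Gradient_of_memD12 hN hD (aestronglyMeasurable_of_integrable_hsDensity hk
    (two_pos.trans (two_lt_twoStar hN hσ)).ne' (fun x ↦ (hpos x).le) hdensity)

theorem isExtremal_of_groundState (hN : 3 ≤ N) (hσ : σ ∈ Ico 0 2) (hk : σ < (N : ℝ) - k)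
    (hw : GroundState N k σ w) :
    IsExtremal volume (fun x ↦ zNorm N k x ^ (-σ)) (twoStar N σ) (Sconst N k σ) w (∇ w) := by
  have hkN : k < N := by exact_mod_cast sub_pos.1 (hσ.1.trans_lt hk)
  have hq : 2 < twoStar N σ := two_lt_twoStar hN hσ.2
  have hD := hasD12Gradient_of_groundState hN hkN hσ.2 hw
  obtain ⟨-, hpos, hint, henergy⟩ := hw
  rw [gradL2_eq_integral_gradient] at henergy
  have hne : ¬ w =ᵐ[volume] 0 := fun h ↦ by
    obtain ⟨x, hx⟩ := h.exists
    exact (hpos x).ne' hx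
  exact {
    pos := henergy ▸ hD.integral_norm_sq_pos (by rw [finrank_euclideanSpace_fin]; lia) hne
    two_lt := hq
    weight_nonneg := fun x ↦ Real.rpow_nonneg (zNorm_nonneg x) _
    locallyIntegrable := locallyIntegrable_zNorm_rpow_neg hσ.1 hk
    le_integral := fun φ hφ ↦ by
      rw [← gradL2_eq_integral_gradient, ← hsInt_eq_integral_powDensity]
      exact hφ.Sconst_mul_hsInt_rpow_le (two_pos.trans hq)
    hasD12Gradient := hD
    integral_powDensity := hint
    integral_norm_sq := henergy }

theorem zNorm_sq_eq_sum_inner_sq (x : Euc N) :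
    zNorm N k x ^ 2 = ∑ i ∈ zIndices N k, inner ℝ (EuclideanSpace.single i 1) x ^ 2 := by
  simp [zNorm_sq, EuclideanSpace.inner_single_left]

theorem zNorm_sq_mul_powDensity {x : Euc N} (hx : 0 < zNorm N k x) (hwx : 0 ≤ w x) :
    zNorm N k x ^ 2 * powDensity (fun y ↦ zNorm N k y ^ (-σ)) (twoStar N σ) w x =
      zNorm N k x ^ (2 - σ) * w x ^ twoStar N σ := by
  rw [powDensity, abs_of_nonneg hwx, ← mul_assoc, sub_eq_add_neg, Real.rpow_add hx,
    Real.rpow_two]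

variable {G : Euc N → Euc N} {q S : ℝ} {ρ : Euc N → ℝ}

theorem zNorm_sq_le_bracket_sq (x : Euc N) : zNorm N k x ^ 2 ≤ bracket x ^ 2 :=
  pow_le_pow_left₀ (zNorm_nonneg x) ((zNorm_le_norm x).trans (norm_le_bracket x)) 2

theorem integral_zNorm_sq_mul_eq_sum {g : Euc N → ℝ} (hg : Integrable fun x ↦ bracket x ^ 2 * g x) :
    ∫ x, zNorm N k x ^ 2 * g x =
      ∑ i ∈ zIndices N k, ∫ x, inner ℝ (EuclideanSpace.single i 1) x ^ 2 * g x := by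
  have hint (i : Fin N) :
      Integrable fun x ↦ inner ℝ (EuclideanSpace.single i (1 : ℝ)) x ^ 2 * g x :=
    integrable_mul_of_abs_le_bracket_pow hg (by fun_prop) fun x ↦
      abs_inner_sq_le x (EuclideanSpace.single i (1 : ℝ))
  rw [← integral_finsetSum _ fun i _ ↦ hint i]
  simp only [zNorm_sq_eq_sum_inner_sq, Finset.sum_mul]

theorem IsExtremal.integral_zNorm_sq_mul (hw : IsExtremal volume ρ q S w G) (hN : 5 ≤ N)
    (hk : k < N) : S * ∫ x, zNorm N k x ^ 2 * powDensity ρ q w x =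
      (∫ x, zNorm N k x ^ 2 * ‖G x‖ ^ 2) - ((N : ℝ) - k) * ∫ x, w x ^ 2 := by
  have hd : 5 ≤ Module.finrank ℝ (Euc N) := by rwa [finrank_euclideanSpace_fin]
  rw [integral_zNorm_sq_mul_eq_sum (hw.integrable_bracket_sq_mul_powDensity hd),
    integral_zNorm_sq_mul_eq_sum (hw.integrable_bracket_sq_mul_norm_sq hd), Finset.mul_sum]
  simp only [← hw.integral_inner_sq_mul hd, Finset.sum_sub_distrib, PiLp.norm_single, norm_one,
    one_pow, one_mul, Finset.sum_const, card_zIndices hk, nsmul_eq_mul,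
    Nat.cast_sub hk.le]

end Cylindrical

end HardySobolev

open HardySobolev in
theorem statement14_general (N k : ℕ) (σ : ℝ) (hN : 5 ≤ N) (hσ : σ ∈ Set.Ico (0 : ℝ) 2)
    (hk : σ < (N : ℝ) - k) (w : Euc N → ℝ) (hw : GroundState N k σ w) :
    Integrable (fun x => zNorm N k x ^ 2 * ‖fderiv ℝ w x‖ ^ 2) ∧
    Integrable (fun x => w x ^ 2) ∧
    Integrable (fun x => zNorm N k x ^ ((2 : ℝ) - σ) * w x ^ twoStar N σ) ∧
    Sconst N k σ * ∫ x, zNorm N k x ^ ((2 : ℝ) - σ) * w x ^ twoStar N σ =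
      (∫ x, zNorm N k x ^ 2 * ‖fderiv ℝ w x‖ ^ 2) -
        ((N : ℝ) - k) * ∫ x, w x ^ 2 := by
  have hkN : k < N := by exact_mod_cast sub_pos.1 (hσ.1.trans_lt hk)
  have hd : 5 ≤ Module.finrank ℝ (Euc N) := by rwa [finrank_euclideanSpace_fin]
  have hext := isExtremal_of_groundState (by lia) hσ hk hw
  have hdensity := (ae_zNorm_pos hkN).mono fun x hx ↦
    zNorm_sq_mul_powDensity (σ := σ) hx (hw.2.1 x).le
  have hz : Continuous fun x ↦ zNorm N k x ^ 2 := continuous_zNorm.pow 2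
  have hz_le (x : Euc N) : |zNorm N k x ^ 2| ≤ 1 * bracket x ^ 2 := by
    simpa only [abs_sq, one_mul] using zNorm_sq_le_bracket_sq x
  simp only [← norm_gradient]
  refine ⟨integrable_mul_of_abs_le_bracket_pow (hext.integrable_bracket_sq_mul_norm_sq hd) hz
      hz_le, hext.integrable_sq hd,
    (integrable_mul_of_abs_le_bracket_pow (hext.integrable_bracket_sq_mul_powDensity hd) hz
      hz_le).congr hdensity, ?_⟩
  rw [← integral_congr_ae hdensity]
  exact hext.integral_zNorm_sq_mul hN hkN

/-- Pohozaev-type identity in the `z`-variable: for `N ≥ 5`,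
`1 ≤ k ≤ N-2`, `σ ∈ (0,2)` and a positive ground state `w` for `S_{N,σ}`, the integrals
`∫ |z|²|∇w|²`, `∫ w²`, `∫ |z|^{2-σ} w^{2*_σ}` are finite and
`S_{N,σ} ∫ |z|^{2-σ} w^{2*_σ} = ∫ |z|²|∇w|² − (N-k) ∫ w²`. -/
theorem statement14 (N k : ℕ) (σ : ℝ) (hN : 5 ≤ N) (hk1 : 1 ≤ k) (hk2 : k ≤ N - 2)
    (hσ : σ ∈ Set.Ioo (0 : ℝ) 2) (w : Euc N → ℝ) (hw : GroundState N k σ w) :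
    Integrable (fun x => zNorm N k x ^ 2 * ‖fderiv ℝ w x‖ ^ 2) ∧
    Integrable (fun x => w x ^ 2) ∧
    Integrable (fun x => zNorm N k x ^ ((2 : ℝ) - σ) * w x ^ twoStar N σ) ∧
    Sconst N k σ * ∫ x, zNorm N k x ^ ((2 : ℝ) - σ) * w x ^ twoStar N σ =
      (∫ x, zNorm N k x ^ 2 * ‖fderiv ℝ w x‖ ^ 2) -
        ((N : ℝ) - k) * ∫ x, w x ^ 2 := by
  have hk : (k : ℝ) + 2 ≤ N := by exact_mod_cast (by lia : k + 2 ≤ N)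
  exact statement14_general N k σ hN (Set.Ioo_subset_Ico_self hσ) (by linarith [hσ.2]) w hw
end
end
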